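/- arXiv:2105.12345 — 4 statements merged into one kernel-verified Lean document; each statement's English description precedes it below -/
import Mathlib

section
/- Let p be a prime number and let Y be a nontrivial additive subgroup of ℚ such that p·Y = Y and q·Y ≠ Y for every prime q ≠ p. Let n ≥ 2 and let r_1, …, r_n be nonzero rational numbers such that r_j·Y = Y for each j and r_1² + ⋯ + r_n² = 1. Let f : Y → ℂ be a positive definite function with f(0) = 1 satisfying f(y) = ∏_{j=1}^n f(r_j y) for all y ∈ Y. Then there exist a real number σ ≥ 0, an additive subgroup E of Y with the property that for every y ∈ Y one has y ∈ E if and only if p·y ∈ E, and a character χ of Y, such that f(y) = χ(y)·exp(−σ y²) for all y ∈ E and f(y) = 0 for all y ∈ Y with y ∉ E. -/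
open scoped BigOperators

/-- A function `f : G → ℂ` on an additive abelian group is positive definite if every
quadratic form `∑ cᵢ c̄ⱼ f(yᵢ - yⱼ)` is a nonnegative real number. -/
def IsPositiveDefinite {G : Type*} [AddCommGroup G] (f : G → ℂ) : Prop :=
  ∀ (n : ℕ) (y : Fin n → G) (c : Fin n → ℂ),
    ∃ t : ℝ, 0 ≤ t ∧ ∑ i, ∑ j, c i * (starRingEnd ℂ) (c j) * f (y i - y j) = (t : ℂ)

/-- The image of a subgroup of `ℚ` under multiplication by a rational number. -/
def ratSMul (r : ℚ) (Y : AddSubgroup ℚ) : Set ℚ := (fun y => r * y) '' (Y : Set ℚ)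

namespace PolyaAux

lemma pd_herm {G : Type*} [AddCommGroup G] {f : G → ℂ} (hpd : IsPositiveDefinite f)
    (hf0 : f 0 = 1) (x : G) : f (-x) = (starRingEnd ℂ) (f x) := by
  obtain ⟨t, -, h1⟩ := hpd 2 ![x, 0] ![1, 1]
  obtain ⟨s, -, h2⟩ := hpd 2 ![x, 0] ![1, Complex.I]
  simp [Fin.sum_univ_two, hf0] at h1 h2
  have h1i := congrArg Complex.im h1
  have h2i := congrArg Complex.im h2
  simp at h1i h2i
  apply Complex.ext
  · simp; linarith
  · simp; linarith

lemma pd_norm {G : Type*} [AddCommGroup G] {f : G → ℂ} (hpd : IsPositiveDefinite f)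
    (hf0 : f 0 = 1) (x : G) : ‖f x‖ ^ 2 ≤ 1 := by
  obtain ⟨t, ht, h1⟩ := hpd 2 ![x, 0] ![1, -f x]
  simp [Fin.sum_univ_two, hf0, pd_herm hpd hf0] at h1
  have h1i := congrArg Complex.re h1
  simp at h1i
  rw [← Complex.normSq_eq_norm_sq, Complex.normSq_apply]
  nlinarith

lemma pd_three {G : Type*} [AddCommGroup G] {f : G → ℂ} (hpd : IsPositiveDefinite f)
    (hf0 : f 0 = 1) (x y : G) :
    ‖f (x + y) - f x * f y‖ ^ 2 ≤ (1 - ‖f x‖ ^ 2) * (1 - ‖f y‖ ^ 2) := by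
  have key : ∀ t : ℝ, 0 ≤ (1 - ‖f y‖ ^ 2) * (t * t) +
      (-(2 * ‖f (x + y) - f x * f y‖ ^ 2)) * t +
      ‖f (x + y) - f x * f y‖ ^ 2 * (1 - ‖f x‖ ^ 2) := by
    intro t
    have hxy : f (-y + -x) = (starRingEnd ℂ) (f (x + y)) := by
      rw [← pd_herm hpd hf0]; congr 1; abel
    have hxy' : f (-y - x) = (starRingEnd ℂ) (f (x + y)) := by
      rw [← pd_herm hpd hf0]; congr 1; abel
    obtain ⟨q, hq, h1⟩ := hpd 3 ![x, 0, -y]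
      ![-(starRingEnd ℂ) (f (x + y) - f x * f y),
        -(-(starRingEnd ℂ) (f (x + y) - f x * f y) * f x + t * (starRingEnd ℂ) (f y)), t]
    simp [Fin.sum_univ_three, hf0, pd_herm hpd hf0, hxy'] at h1
    have h1i := congrArg Complex.re h1
    simp at h1i
    simp only [← Complex.normSq_eq_norm_sq, Complex.normSq_apply]
    simp
    refine hq.trans (le_of_eq ?_)
    rw [← h1i]
    ring
  have hd := discrim_le_zero key
  unfold discrim at hd
  rcases eq_or_lt_of_le (sq_nonneg ‖f (x + y) - f x * f y‖) with h | h
  · rw [← h]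
    apply mul_nonneg <;> linarith [pd_norm hpd hf0 x, pd_norm hpd hf0 y]
  · by_contra hc
    push Not at hc
    nlinarith [mul_lt_mul_of_pos_left hc h]

/-- The key lemma on sequences. -/
lemma seq_lemma {n : ℕ} (hn : 2 ≤ n) (a : ℕ → ℝ) (h0 : ∀ k, 0 ≤ a k) (h1 : ∀ k, a k ≤ 1)
    (m : Fin n → ℕ) (hm : ∀ j, 1 ≤ m j) (P : ℝ) (hP : 1 ≤ P)
    (hs : ∑ j, (P ^ m j)⁻¹ = 1) (ha : ∀ k, a k = ∏ j, a (k + m j))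
    (hmono : ∀ k, 1 - a k ≤ P * (1 - a (k + 1))) (k0 : ℕ) (hk0 : a k0 ≠ 0) :
    (∀ k, 0 < a k) ∧ (∀ ε > 0, ∃ K, ∀ k ≥ K, 1 - a k < ε) ∧
      (∀ k, P ^ k * (-Real.log (a k)) = -Real.log (a 0)) := by
  have hP0 : 0 < P := by linarith
  -- monotonicity
  have hmono' : ∀ k i, 1 - a k ≤ P ^ i * (1 - a (k + i)) := by
    intro k i
    induction i with
    | zero => simp
    | succ i ih =>
      refine ih.trans ?_
      rw [pow_succ, mul_assoc]
      exact mul_le_mul_of_nonneg_left (hmono (k + i)) (by positivity)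
  have hv : ∀ k l, k ≤ l → P ^ k * (1 - a k) ≤ P ^ l * (1 - a l) := by
    intro k l hkl
    obtain ⟨i, rfl⟩ := Nat.exists_eq_add_of_le hkl
    rw [pow_add, mul_assoc]
    exact mul_le_mul_of_nonneg_left (hmono' k i) (by positivity)
  -- one factor
  have hone : ∀ j k, a k ≤ a (k + m j) := by
    intro j k
    rw [ha k, ← Finset.mul_prod_erase Finset.univ _ (Finset.mem_univ j)]
    exact mul_le_of_le_one_right (h0 _) (Finset.prod_le_one (fun _ _ => h0 _) (fun _ _ => h1 _))
  have hiter : ∀ j k i, a k ≤ a (k + i * m j) := by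
    intro j k i
    induction i with
    | zero => simp
    | succ i ih =>
      refine ih.trans ((hone j _).trans (le_of_eq ?_))
      congr 1; ring
  let j0 : Fin n := ⟨0, by omega⟩
  let j1 : Fin n := ⟨1, by omega⟩
  have hj : j1 ≠ j0 := by simp [j0, j1]
  set M := m j0 * m j1 with hM
  have hM1 : 1 ≤ M := Nat.mul_pos (hm _) (hm _)
  have htwo : ∀ k, a k ≤ a (k + M) ^ 2 := by
    intro k
    rw [ha k, ← Finset.mul_prod_erase Finset.univ _ (Finset.mem_univ j0),
      ← Finset.mul_prod_erase _ _ (Finset.mem_erase.2 ⟨hj, Finset.mem_univ j1⟩), ← mul_assoc]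
    refine (mul_le_of_le_one_right (mul_nonneg (h0 _) (h0 _))
      (Finset.prod_le_one (fun _ _ => h0 _) (fun _ _ => h1 _))).trans ?_
    rw [sq]
    have e0 : a (k + m j0) ≤ a (k + M) := by
      refine (hiter j0 _ (m j1 - 1)).trans (le_of_eq ?_)
      congr 1
      obtain ⟨c, hc⟩ := Nat.exists_eq_add_of_le (hm j1)
      rw [hM, hc]; simp; ring
    have e1 : a (k + m j1) ≤ a (k + M) := by
      refine (hiter j1 _ (m j0 - 1)).trans (le_of_eq ?_)
      congr 1
      obtain ⟨c, hc⟩ := Nat.exists_eq_add_of_le (hm j0)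
      rw [hM, hc]; simp; ring
    exact mul_le_mul e0 e1 (h0 _) (h0 _)
  have hpow : ∀ i, a k0 ≤ a (k0 + i * M) ^ (2 ^ i) := by
    intro i
    induction i with
    | zero => simp
    | succ i ih =>
      refine ih.trans ?_
      rw [pow_succ 2 i, mul_comm (2 ^ i) 2, pow_mul]
      refine pow_le_pow_left₀ (h0 _) ?_ _
      refine (htwo _).trans (le_of_eq ?_)
      congr 2; ring
  have hk0p : 0 < a k0 := lt_of_le_of_ne (h0 _) (Ne.symm hk0)
  set L := -Real.log (a k0) with hL
  have hL0 : 0 ≤ L := by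
    have := Real.log_nonpos (h0 k0) (h1 k0); linarith
  have hsmall : ∀ i : ℕ, 1 - a (k0 + i * M) ≤ L / 2 ^ i := by
    intro i
    have hp : 0 < a (k0 + i * M) := by
      rcases eq_or_lt_of_le (h0 (k0 + i * M)) with h | h
      · have := hpow i
        rw [← h, zero_pow (by positivity)] at this
        linarith
      · exact h
    have h2 := Real.log_le_log hk0p (hpow i)
    rw [Real.log_pow] at h2
    have h3 := Real.log_le_sub_one_of_pos hp
    have h4 : (0 : ℝ) < 2 ^ i := by positivity
    rw [le_div_iff₀ h4]
    push_cast at h2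
    nlinarith
  have hlim : ∀ ε > 0, ∃ K, ∀ k ≥ K, 1 - a k < ε := by
    intro ε hε
    obtain ⟨i0, hi0⟩ := pow_unbounded_of_one_lt (P ^ M * L / ε) (one_lt_two)
    refine ⟨k0 + i0 * M, fun k hk => ?_⟩
    set i := (k - k0) / M + 1 with hi
    have hii : i0 ≤ i := by
      have : i0 ≤ (k - k0) / M := (Nat.le_div_iff_mul_le hM1).2 (by omega)
      omega
    have hd := Nat.div_add_mod (k - k0) M
    have hml := Nat.mod_lt (k - k0) hM1
    have hkk : k0 ≤ k := by
      have : 0 ≤ i0 * M := Nat.zero_le _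
      omega
    have hiM : i * M = M * ((k - k0) / M) + M := by rw [hi]; ring
    have hle : k ≤ k0 + i * M := by rw [hiM]; omega
    have hle2 : k0 + i * M - k ≤ M := by rw [hiM]; omega
    have e1 := hmono' k (k0 + i * M - k)
    rw [Nat.add_sub_cancel' hle] at e1
    have e2 : P ^ (k0 + i * M - k) ≤ P ^ M := pow_le_pow_right₀ hP hle2
    have e3 : (2 : ℝ) ^ i0 ≤ 2 ^ i := pow_le_pow_right₀ one_le_two hii
    have e4 : L / 2 ^ i ≤ L / 2 ^ i0 := by gcongr
    calc 1 - a k ≤ P ^ (k0 + i * M - k) * (1 - a (k0 + i * M)) := e1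
      _ ≤ P ^ M * (L / 2 ^ i0) :=
        mul_le_mul e2 ((hsmall i).trans e4) (by linarith [h1 (k0 + i * M)]) (by positivity)
      _ < ε := by
        rw [div_lt_iff₀ hε] at hi0
        rw [← mul_div_assoc, div_lt_iff₀ (by positivity)]
        linarith
  have hpos : ∀ k, 0 < a k := by
    intro k
    by_contra hc
    have hz : a k = 0 := le_antisymm (not_lt.1 hc) (h0 k)
    have : ∀ t, ∃ k' ≥ t, a k' = 0 := by
      intro t
      induction t with
      | zero => exact ⟨k, Nat.zero_le _, hz⟩
      | succ t ih =>
        obtain ⟨k', hk', hz'⟩ := ih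
        rw [ha k', Finset.prod_eq_zero_iff] at hz'
        obtain ⟨j, -, hj⟩ := hz'
        exact ⟨_, by have := hm j; omega, hj⟩
    obtain ⟨K, hK⟩ := hlim 1 one_pos
    obtain ⟨k', hk', hz'⟩ := this K
    have := hK k' hk'
    linarith
  refine ⟨hpos, hlim, ?_⟩
  set u : ℕ → ℝ := fun k => P ^ k * (-Real.log (a k)) with hu
  have hu0 : ∀ k, 0 ≤ u k := fun k => mul_nonneg (by positivity) (by
    have := Real.log_nonpos (h0 k) (h1 k); linarith)
  have hharm : ∀ k, u k = ∑ j, (P ^ m j)⁻¹ * u (k + m j) := by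
    intro k
    simp only [hu]
    conv_lhs => rw [ha k, Real.log_prod (fun j _ => (hpos _).ne')]
    rw [← Finset.sum_neg_distrib, Finset.mul_sum]
    refine Finset.sum_congr rfl fun j _ => ?_
    rw [pow_add]
    have : P ^ m j ≠ 0 := by positivity
    field_simp
  have hw : ∀ j, 0 < (P ^ m j)⁻¹ := fun j => by positivity
  have hup : ∀ k, ∃ j, u k ≤ u (k + m j) := by
    intro k
    by_contra hc
    push Not at hc
    have : ∑ j, (P ^ m j)⁻¹ * u (k + m j) < ∑ j, (P ^ m j)⁻¹ * u k :=
      Finset.sum_lt_sum_of_nonempty ⟨j0, Finset.mem_univ _⟩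
        fun j _ => mul_lt_mul_of_pos_left (hc j) (hw j)
    rw [← hharm, ← Finset.sum_mul, hs, one_mul] at this
    exact lt_irrefl _ this
  have hdn : ∀ k, ∃ j, u (k + m j) ≤ u k := by
    intro k
    by_contra hc
    push Not at hc
    have : ∑ j, (P ^ m j)⁻¹ * u k < ∑ j, (P ^ m j)⁻¹ * u (k + m j) :=
      Finset.sum_lt_sum_of_nonempty ⟨j0, Finset.mem_univ _⟩
        fun j _ => mul_lt_mul_of_pos_left (hc j) (hw j)
    rw [← hharm, ← Finset.sum_mul, hs, one_mul] at this
    exact lt_irrefl _ this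
  have hup' : ∀ k N, ∃ k' ≥ N, u k ≤ u k' := by
    intro k N
    induction N with
    | zero => exact ⟨k, Nat.zero_le _, le_rfl⟩
    | succ N ih =>
      obtain ⟨k', hk', h⟩ := ih
      obtain ⟨j, hj⟩ := hup k'
      exact ⟨_, by have := hm j; omega, h.trans hj⟩
  have hdn' : ∀ k N, ∃ k' ≥ N, u k' ≤ u k := by
    intro k N
    induction N with
    | zero => exact ⟨k, Nat.zero_le _, le_rfl⟩
    | succ N ih =>
      obtain ⟨k', hk', h⟩ := ih
      obtain ⟨j, hj⟩ := hdn k'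
      exact ⟨_, by have := hm j; omega, hj.trans h⟩
  have hvu : ∀ k, P ^ k * (1 - a k) ≤ u k := fun k =>
    mul_le_mul_of_nonneg_left (by linarith [Real.log_le_sub_one_of_pos (hpos k)]) (by positivity)
  have huv : ∀ k, a k * u k ≤ P ^ k * (1 - a k) := by
    intro k
    have h2 := Real.one_sub_inv_le_log_of_pos (hpos k)
    have h3 : a k * (-Real.log (a k)) ≤ 1 - a k := by
      have h4 := mul_le_mul_of_nonneg_left h2 (h0 k)
      rw [mul_sub, mul_inv_cancel₀ (hpos k).ne'] at h4
      linarith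
    calc a k * u k = P ^ k * (a k * (-Real.log (a k))) := by simp only [hu]; ring
      _ ≤ _ := mul_le_mul_of_nonneg_left h3 (by positivity)
  have hle : ∀ k l, u k ≤ u l := by
    intro k l
    by_contra hc
    push Not at hc
    have hukp : 0 < u k := (hu0 l).trans_lt hc
    obtain ⟨K, hK⟩ := hlim ((u k - u l) / u k) (div_pos (by linarith) hukp)
    obtain ⟨k', hk', hkk⟩ := hup' k K
    obtain ⟨l', hl', hll⟩ := hdn' l k'
    have e1 := hK k' hk'
    rw [lt_div_iff₀ hukp] at e1
    have e2 : a k' * u k ≤ a k' * u k' := mul_le_mul_of_nonneg_left hkk (h0 _)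
    have e3 := huv k'
    have e4 := hv k' l' hl'
    have e5 := hvu l'
    linarith
  intro k
  have := le_antisymm (hle k 0) (hle 0 k)
  simpa [hu] using this

end PolyaAux
namespace PolyaAux

/-- The hypotheses on the extension by zero of the function `f` to all of `ℚ`. -/
structure Sol (p n : ℕ) (m : Fin n → ℕ) (e : Fin n → ℚ) (F : ℚ → ℂ) : Prop where
  hp : 2 ≤ p
  hn : 2 ≤ n
  hm : ∀ j, 1 ≤ m j
  he : ∀ j, e j = 1 ∨ e j = -1
  hs : ∑ j, (((p : ℝ) ^ 2) ^ m j)⁻¹ = 1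
  zero : F 0 = 1
  herm : ∀ x, F (-x) = (starRingEnd ℂ) (F x)
  norm : ∀ x, ‖F x‖ ^ 2 ≤ 1
  three : ∀ x y, ‖F (x + y) - F x * F y‖ ^ 2 ≤ (1 - ‖F x‖ ^ 2) * (1 - ‖F y‖ ^ 2)
  fe : ∀ x, F x = ∏ j, F (e j * (x / (p : ℚ) ^ m j))

/-- The square root of `1 - |F|²`. -/
noncomputable def S (F : ℚ → ℂ) (x : ℚ) : ℝ := Real.sqrt (1 - ‖F x‖ ^ 2)

/-- The square root of `-log |F|²`. -/
noncomputable def H (F : ℚ → ℂ) (x : ℚ) : ℝ := Real.sqrt (-Real.log (‖F x‖ ^ 2))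

namespace Sol

variable {p n : ℕ} {m : Fin n → ℕ} {e : Fin n → ℚ} {F : ℚ → ℂ}

lemma norm_neg (h : Sol p n m e F) (x : ℚ) : ‖F (-x)‖ = ‖F x‖ := by
  rw [h.herm, RCLike.norm_conj]

lemma norm_e (h : Sol p n m e F) (j : Fin n) (x : ℚ) : ‖F (e j * x)‖ = ‖F x‖ := by
  rcases h.he j with h1 | h1 <;> simp [h1, h.norm_neg]

lemma S_add (h : Sol p n m e F) (x y : ℚ) : S F (x + y) ≤ S F x + S F y := by
  have hx := h.norm x
  have hy := h.norm y
  have h3 := h.three x y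
  have hs0 : 0 ≤ S F x := Real.sqrt_nonneg _
  have ht0 : 0 ≤ S F y := Real.sqrt_nonneg _
  have hs : S F x ^ 2 = 1 - ‖F x‖ ^ 2 := Real.sq_sqrt (by linarith)
  have ht : S F y ^ 2 = 1 - ‖F y‖ ^ 2 := Real.sq_sqrt (by linarith)
  rw [← hs, ← ht, ← mul_pow] at h3
  have h4 := (sq_le_sq₀ (norm_nonneg _) (mul_nonneg hs0 ht0)).1 h3
  have h5 : ‖F x‖ * ‖F y‖ - S F x * S F y ≤ ‖F (x + y)‖ := by
    have := norm_sub_norm_le (F x * F y) (F (x + y))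
    rw [norm_mul, norm_sub_rev] at this
    linarith
  rw [S]
  apply Real.sqrt_le_iff.2 ⟨by positivity, ?_⟩
  have ha := norm_nonneg (F x)
  have hb := norm_nonneg (F y)
  have hc := norm_nonneg (F (x + y))
  set a := ‖F x‖
  set b := ‖F y‖
  set c := ‖F (x + y)‖
  set s := S F x
  set t := S F y
  have ha1 : a ≤ 1 := by nlinarith
  have hb1 : b ≤ 1 := by nlinarith
  have hst : 0 ≤ s * t := by positivity
  rcases le_total 0 (a * b - s * t) with h6 | h6
  · have h7 : (a * b - s * t) ^ 2 ≤ c ^ 2 := pow_le_pow_left₀ h6 h5 2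
    have h8 : 1 - (a * b - s * t) ^ 2 = (s * b + t * a) ^ 2 := by
      have e1 : a ^ 2 = 1 - s ^ 2 := by linarith
      have e2 : b ^ 2 = 1 - t ^ 2 := by linarith
      have : (s * b + t * a) ^ 2 = s ^ 2 * b ^ 2 + t ^ 2 * a ^ 2 + 2 * (s * t) * (a * b) := by ring
      have h9 : (a * b - s * t) ^ 2 = a ^ 2 * b ^ 2 + s ^ 2 * t ^ 2 - 2 * (s * t) * (a * b) := by
        ring
      rw [this, h9, e1, e2]; ring
    have h9 : (s * b + t * a) ^ 2 ≤ (s + t) ^ 2 := by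
      apply pow_le_pow_left₀ (by positivity)
      nlinarith
    linarith
  · have h7 : (a * b) ^ 2 ≤ (s * t) ^ 2 := pow_le_pow_left₀ (by positivity) (by linarith) 2
    rw [mul_pow, mul_pow, hs, ht] at h7
    nlinarith

lemma S_zero (h : Sol p n m e F) : S F 0 = 0 := by simp [S, h.zero]

lemma S_nat (h : Sol p n m e F) (k : ℕ) (x : ℚ) : S F (k * x) ≤ k * S F x := by
  induction k with
  | zero => simp [h.S_zero]
  | succ k ih =>
    have := h.S_add (k * x) x
    have e1 : ((k + 1 : ℕ) : ℚ) * x = k * x + x := by push_cast; ring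
    rw [e1]
    push_cast
    linarith

lemma p_ne (h : Sol p n m e F) : (p : ℚ) ≠ 0 := by
  have := h.hp
  exact_mod_cast (by omega : p ≠ 0)

lemma level (h : Sol p n m e F) (y : ℚ) (k0 : ℕ) (hk0 : F (y / (p : ℚ) ^ k0) ≠ 0) :
    (∀ k : ℕ, F (y / (p : ℚ) ^ k) ≠ 0) ∧
    (∀ ε > 0, ∃ K, ∀ k ≥ K, 1 - ‖F (y / (p : ℚ) ^ k)‖ ^ 2 < ε) ∧
    (∀ k : ℕ, ((p : ℝ) ^ 2) ^ k * (-Real.log (‖F (y / (p : ℚ) ^ k)‖ ^ 2))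
      = -Real.log (‖F y‖ ^ 2)) := by
  have hp := h.hp
  have hp0 := h.p_ne
  have hpr : (2 : ℝ) ≤ p := by exact_mod_cast hp
  obtain ⟨h1, h2, h3⟩ := seq_lemma h.hn (fun k => ‖F (y / (p : ℚ) ^ k)‖ ^ 2)
    (fun k => by positivity) (fun k => h.norm _) m h.hm ((p : ℝ) ^ 2) (by nlinarith) h.hs
    (by
      intro k
      rw [h.fe (y / (p : ℚ) ^ k), norm_prod, ← Finset.prod_pow]
      refine Finset.prod_congr rfl fun j _ => ?_
      rw [h.norm_e, div_div, pow_add])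
    (by
      intro k
      have h4 := h.S_nat p (y / (p : ℚ) ^ (k + 1))
      have e1 : (p : ℚ) * (y / (p : ℚ) ^ (k + 1)) = y / (p : ℚ) ^ k := by
        rw [pow_succ]; field_simp
      rw [e1] at h4
      have h5 := pow_le_pow_left₀ (Real.sqrt_nonneg _ : 0 ≤ S F (y / (p : ℚ) ^ k)) h4 2
      simp only [S] at h5
      rw [mul_pow, Real.sq_sqrt (by linarith [h.norm (y / (p : ℚ) ^ k)]),
        Real.sq_sqrt (by linarith [h.norm (y / (p : ℚ) ^ (k + 1))])] at h5
      exact h5) k0 (by simpa using hk0)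
  refine ⟨fun k hk => ?_, h2, fun k => ?_⟩
  · have := h1 k
    simp [hk] at this
  · simpa using h3 k

lemma ne_mul (h : Sol p n m e F) (y : ℚ) : F y ≠ 0 ↔ F (p * y) ≠ 0 := by
  have hp0 := h.p_ne
  constructor
  · intro hy
    have := (h.level (p * y) 1 (by simpa [hp0] using hy)).1 0
    simpa using this
  · intro hy
    have := (h.level (p * y) 0 (by simpa using hy)).1 1
    simpa [hp0] using this

lemma ne_neg (h : Sol p n m e F) {y : ℚ} (hy : F y ≠ 0) : F (-y) ≠ 0 := by
  rw [← norm_ne_zero_iff, h.norm_neg, norm_ne_zero_iff]; exact hy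

lemma level' (h : Sol p n m e F) {y : ℚ} (hy : F y ≠ 0) :
    (∀ k : ℕ, F (y / (p : ℚ) ^ k) ≠ 0) ∧
    (∀ ε > 0, ∃ K, ∀ k ≥ K, 1 - ‖F (y / (p : ℚ) ^ k)‖ ^ 2 < ε) ∧
    (∀ k : ℕ, ((p : ℝ) ^ 2) ^ k * (-Real.log (‖F (y / (p : ℚ) ^ k)‖ ^ 2))
      = -Real.log (‖F y‖ ^ 2)) := h.level y 0 (by simpa using hy)

lemma ne_add (h : Sol p n m e F) {x y : ℚ} (hx : F x ≠ 0) (hy : F y ≠ 0) : F (x + y) ≠ 0 := by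
  obtain ⟨K1, h1⟩ := (h.level' hx).2.1 (1 / 4) (by norm_num)
  obtain ⟨K2, h2⟩ := (h.level' hy).2.1 (1 / 4) (by norm_num)
  set k := max K1 K2
  have e1 := h1 k (le_max_left _ _)
  have e2 := h2 k (le_max_right _ _)
  have : F ((x + y) / (p : ℚ) ^ k) ≠ 0 := by
    intro h0
    have h3 := h.S_add (x / (p : ℚ) ^ k) (y / (p : ℚ) ^ k)
    rw [← add_div] at h3
    have e3 : S F ((x + y) / (p : ℚ) ^ k) = 1 := by simp [S, h0]
    have e4 : S F (x / (p : ℚ) ^ k) < 1 / 2 := by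
      rw [S, Real.sqrt_lt' (by norm_num)]; linarith
    have e5 : S F (y / (p : ℚ) ^ k) < 1 / 2 := by
      rw [S, Real.sqrt_lt' (by norm_num)]; linarith
    linarith
  simpa using (h.level (x + y) k this).1 0

/-- The subgroup on which `F` does not vanish. -/
def E (h : Sol p n m e F) : AddSubgroup ℚ where
  carrier := {y | F y ≠ 0}
  zero_mem' := by simp [h.zero]
  add_mem' := fun hx hy => h.ne_add hx hy
  neg_mem' := fun hx => h.ne_neg hx

lemma mem_E (h : Sol p n m e F) {y : ℚ} : y ∈ h.E ↔ F y ≠ 0 := Iff.rfl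

lemma S_lim (h : Sol p n m e F) {y : ℚ} (hy : F y ≠ 0) :
    Filter.Tendsto (fun k : ℕ => (p : ℝ) ^ k * S F (y / (p : ℚ) ^ k)) Filter.atTop
      (nhds (H F y)) := by
  obtain ⟨h1, h2, h3⟩ := h.level' hy
  have ha : Filter.Tendsto (fun k : ℕ => ‖F (y / (p : ℚ) ^ k)‖ ^ 2) Filter.atTop (nhds 1) := by
    rw [Metric.tendsto_atTop]
    intro ε hε
    obtain ⟨K, hK⟩ := h2 ε hε
    refine ⟨K, fun k hk => ?_⟩
    rw [Real.dist_eq, abs_sub_comm, abs_of_nonneg (by linarith [h.norm (y / (p : ℚ) ^ k)])]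
    exact hK k hk
  set L := -Real.log (‖F y‖ ^ 2) with hL
  have hv : Filter.Tendsto (fun k : ℕ => ((p : ℝ) ^ 2) ^ k * (1 - ‖F (y / (p : ℚ) ^ k)‖ ^ 2))
      Filter.atTop (nhds L) := by
    have hl : Filter.Tendsto (fun k : ℕ => ‖F (y / (p : ℚ) ^ k)‖ ^ 2 * L) Filter.atTop
        (nhds L) := by simpa using ha.mul_const L
    refine tendsto_of_tendsto_of_tendsto_of_le_of_le hl tendsto_const_nhds ?_ ?_
    · intro k
      dsimp only
      have hpos : 0 < ‖F (y / (p : ℚ) ^ k)‖ ^ 2 := by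
        have := norm_pos_iff.2 (h1 k); positivity
      rw [← h3 k]
      have h5 := Real.one_sub_inv_le_log_of_pos hpos
      have h4 := mul_le_mul_of_nonneg_left h5 hpos.le
      rw [mul_sub, mul_inv_cancel₀ hpos.ne'] at h4
      rw [mul_left_comm]
      exact mul_le_mul_of_nonneg_left (by linarith) (by positivity)
    · intro k
      dsimp only
      have hpos : 0 < ‖F (y / (p : ℚ) ^ k)‖ ^ 2 := by
        have := norm_pos_iff.2 (h1 k); positivity
      rw [← h3 k]
      exact mul_le_mul_of_nonneg_left (by linarith [Real.log_le_sub_one_of_pos hpos])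
        (by positivity)
  have := (Real.continuous_sqrt.tendsto L).comp hv
  refine this.congr fun k => ?_
  simp only [Function.comp, S]
  rw [Real.sqrt_mul (by positivity), ← pow_mul, mul_comm 2 k, pow_mul, Real.sqrt_sq (by positivity)]

lemma H_add (h : Sol p n m e F) {x y : ℚ} (hx : F x ≠ 0) (hy : F y ≠ 0) :
    H F (x + y) ≤ H F x + H F y := by
  refine le_of_tendsto_of_tendsto' (h.S_lim (h.ne_add hx hy)) ((h.S_lim hx).add (h.S_lim hy))
    fun k => ?_
  rw [← mul_add, add_div]
  exact mul_le_mul_of_nonneg_left (h.S_add _ _) (by positivity)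

lemma H_nonneg (x : ℚ) : 0 ≤ H F x := Real.sqrt_nonneg _

lemma H_neg (h : Sol p n m e F) (x : ℚ) : H F (-x) = H F x := by simp [H, h.norm_neg]

lemma H_zero (h : Sol p n m e F) : H F 0 = 0 := by simp [H, h.zero]

lemma H_pow (h : Sol p n m e F) {x : ℚ} (hx : F x ≠ 0) (k : ℕ) :
    H F ((p : ℚ) ^ k * x) = (p : ℝ) ^ k * H F x := by
  have hp0 := h.p_ne
  have hk : F ((p : ℚ) ^ k * x / (p : ℚ) ^ k) ≠ 0 := by
    rwa [mul_div_cancel_left₀ _ (pow_ne_zero _ hp0)]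
  have := (h.level _ k hk).2.2 k
  rw [mul_div_cancel_left₀ _ (pow_ne_zero _ hp0)] at this
  rw [H, ← this, Real.sqrt_mul (by positivity), ← pow_mul, mul_comm 2 k, pow_mul,
    Real.sqrt_sq (by positivity), H]

lemma ne_nat (h : Sol p n m e F) {x : ℚ} (hx : F x ≠ 0) (k : ℕ) : F (k * x) ≠ 0 := by
  have : k • x ∈ h.E := h.E.nsmul_mem hx k
  rwa [nsmul_eq_mul] at this

lemma H_nat_le (h : Sol p n m e F) {x : ℚ} (hx : F x ≠ 0) (k : ℕ) :
    H F (k * x) ≤ k * H F x := by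
  induction k with
  | zero => simp [h.H_zero]
  | succ k ih =>
    have := h.H_add (h.ne_nat hx k) hx
    have e1 : ((k + 1 : ℕ) : ℚ) * x = k * x + x := by push_cast; ring
    rw [e1]
    push_cast
    linarith

lemma H_nat (h : Sol p n m e F) {x : ℚ} (hx : F x ≠ 0) (k : ℕ) :
    H F (k * x) = k * H F x := by
  refine le_antisymm (h.H_nat_le hx k) ?_
  have hk : k ≤ p ^ k := (Nat.lt_pow_self (by have := h.hp; omega)).le
  obtain ⟨c, hc⟩ := Nat.exists_eq_add_of_le hk
  have h1 := h.H_pow hx k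
  have h2 := h.H_add (h.ne_nat hx k) (h.ne_nat hx c)
  have h3 := h.H_nat_le hx c
  have e1 : (p : ℚ) ^ k = k + c := by exact_mod_cast hc
  have e2 : (p : ℝ) ^ k = k + c := by exact_mod_cast hc
  rw [e1, e2] at h1
  rw [← add_mul, h1] at h2
  linarith

lemma H_int (h : Sol p n m e F) {x : ℚ} (hx : F x ≠ 0) (k : ℤ) :
    H F (k * x) = |(k : ℝ)| * H F x := by
  obtain ⟨c, rfl | rfl⟩ := k.eq_nat_or_neg
  · simpa using h.H_nat hx c
  · simpa [h.H_neg] using h.H_nat hx c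

lemma H_lin (h : Sol p n m e F) : ∃ c : ℝ, ∀ y, F y ≠ 0 → H F y = c * |(y : ℝ)| := by
  by_cases hex : ∃ x, F x ≠ 0 ∧ x ≠ 0
  · obtain ⟨x, hx, hx0⟩ := hex
    refine ⟨H F x / |(x : ℝ)|, fun y hy => ?_⟩
    have hxr : |(x : ℝ)| ≠ 0 := by simpa using hx0
    have e1 : (((y / x).den : ℤ) : ℚ) * y = ((y / x).num : ℚ) * x := by
      have h1 := Rat.num_div_den (y / x)
      have h2 : ((y / x).den : ℚ) ≠ 0 := by exact_mod_cast (y / x).den_ne_zero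
      rw [div_eq_div_iff h2 hx0] at h1
      push_cast; linarith
    have h1 := h.H_int hy (y / x).den
    rw [e1, h.H_int hx] at h1
    have e2 : |(((y / x).den : ℤ) : ℝ)| * |(y : ℝ)| = |((y / x).num : ℝ)| * |(x : ℝ)| := by
      rw [← abs_mul, ← abs_mul]
      congr 1
      exact_mod_cast e1
    have h2 : |(((y / x).den : ℤ) : ℝ)| ≠ 0 := by
      have := (y / x).den_ne_zero
      simp
    rw [div_mul_eq_mul_div, eq_div_iff hxr]
    apply mul_left_cancel₀ h2
    linear_combination (-|(x : ℝ)|) * h1 - H F x * e2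
  · push Not at hex
    exact ⟨0, fun y hy => by simp [hex y hy, h.H_zero]⟩

lemma norm_eq (h : Sol p n m e F) : ∃ σ : ℝ, 0 ≤ σ ∧ ∀ y, F y ≠ 0 →
    ‖F y‖ = Real.exp (-σ * (y : ℝ) ^ 2) := by
  obtain ⟨c, hc⟩ := h.H_lin
  refine ⟨c ^ 2 / 2, by positivity, fun y hy => ?_⟩
  have hpos := norm_pos_iff.2 hy
  have h1 := hc y hy
  have h2 : H F y ^ 2 = -Real.log (‖F y‖ ^ 2) := by
    rw [H, Real.sq_sqrt]
    have := Real.log_nonpos (sq_nonneg _) (h.norm y)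
    linarith
  rw [h1, mul_pow, sq_abs, Real.log_pow] at h2
  rw [← Real.exp_log hpos]
  congr 1
  push_cast at h2
  linarith

end Sol
end PolyaAux
namespace PolyaAux

lemma real_ineq (X Y Z : ℝ) (hX : 0 ≤ X) (hY : 0 ≤ Y) (hZ : Z ^ 2 = X * Y) :
    (1 - Real.exp (-X)) * (1 - Real.exp (-Y)) -
      (Real.exp (-(X + Y) / 2 - Z) - Real.exp (-(X + Y) / 2)) ^ 2 ≤
      Z ^ 2 * (X + Y + 2 * |Z|) := by
  have h1 : (1 - Real.exp (-X)) * (1 - Real.exp (-Y)) ≤ Z ^ 2 := by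
    rw [hZ]
    have a1 := Real.add_one_le_exp (-X)
    have a2 := Real.add_one_le_exp (-Y)
    have a3 : Real.exp (-Y) ≤ 1 := Real.exp_le_one_iff.2 (by linarith)
    exact mul_le_mul (by linarith) (by linarith) (by linarith) hX
  have h2 : |Z| * Real.exp (-|Z|) ≤ |Real.exp (-Z) - 1| := by
    rcases le_total 0 Z with h | h
    · rw [abs_of_nonneg h]
      have a1 := Real.add_one_le_exp Z
      have a2 := Real.exp_pos (-Z)
      have a3 : Real.exp Z * Real.exp (-Z) = 1 := by rw [← Real.exp_add]; simp
      refine le_trans ?_ (neg_le_abs _)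
      nlinarith
    · have a1 := Real.add_one_le_exp (-Z)
      have a4 : Real.exp (-|Z|) ≤ 1 := Real.exp_le_one_iff.2 (by simp)
      refine le_trans ?_ (le_abs_self _)
      have : |Z| * Real.exp (-|Z|) ≤ |Z| := mul_le_of_le_one_right (abs_nonneg _) a4
      rw [abs_of_nonpos h] at *
      linarith
  have h3 : Z ^ 2 * Real.exp (-(2 * |Z|)) ≤ (Real.exp (-Z) - 1) ^ 2 := by
    have := pow_le_pow_left₀ (by positivity) h2 2
    have e1 : Real.exp (-|Z|) ^ 2 = Real.exp (-(2 * |Z|)) := by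
      rw [← Real.exp_nat_mul]; congr 1; push_cast; ring
    rwa [sq_abs, mul_pow, sq_abs, e1] at this
  have h4 : (Real.exp (-(X + Y) / 2 - Z) - Real.exp (-(X + Y) / 2)) ^ 2 =
      Real.exp (-(X + Y)) * (Real.exp (-Z) - 1) ^ 2 := by
    have : Real.exp (-(X + Y)) = Real.exp (-(X + Y) / 2) ^ 2 := by
      rw [← Real.exp_nat_mul]; congr 1; push_cast; ring
    rw [this, sub_eq_add_neg (-(X + Y) / 2) Z, Real.exp_add]
    ring
  have h5 : Real.exp (-(X + Y)) * (Z ^ 2 * Real.exp (-(2 * |Z|))) ≤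
      Real.exp (-(X + Y)) * (Real.exp (-Z) - 1) ^ 2 :=
    mul_le_mul_of_nonneg_left h3 (Real.exp_pos _).le
  have h6 : Z ^ 2 * (1 - (X + Y + 2 * |Z|)) ≤
      Real.exp (-(X + Y)) * (Z ^ 2 * Real.exp (-(2 * |Z|))) := by
    rw [mul_left_comm, ← Real.exp_add]
    refine mul_le_mul_of_nonneg_left ?_ (sq_nonneg _)
    have := Real.add_one_le_exp (-(X + Y) + -(2 * |Z|))
    linarith
  rw [h4]
  linarith

lemma norm_prod_sub_one_le {ι : Type*} (s : Finset ι) (z : ι → ℂ) (hz : ∀ i, ‖z i‖ = 1) :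
    ‖∏ i ∈ s, z i - 1‖ ≤ ∑ i ∈ s, ‖z i - 1‖ := by
  classical
  induction s using Finset.induction_on with
  | empty => simp
  | insert a s ha ih =>
    rw [Finset.prod_insert ha, Finset.sum_insert ha]
    have : z a * ∏ i ∈ s, z i - 1 = (z a - 1) + z a * (∏ i ∈ s, z i - 1) := by ring
    rw [this]
    refine (norm_add_le _ _).trans ?_
    rw [norm_mul, hz, one_mul]
    linarith

/-- The phase of `F`. -/
noncomputable def T (F : ℚ → ℂ) (x : ℚ) : ℂ := F x / (‖F x‖ : ℂ)

/-- The defect of multiplicativity of the phase. -/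
noncomputable def tau (F : ℚ → ℂ) (x y : ℚ) : ℂ :=
  T F (x + y) * (starRingEnd ℂ) (T F x) * (starRingEnd ℂ) (T F y)

namespace Sol

variable {p n : ℕ} {m : Fin n → ℕ} {e : Fin n → ℚ} {F : ℚ → ℂ}

lemma T_norm {x : ℚ} (hx : F x ≠ 0) : ‖T F x‖ = 1 := by
  simp [T, hx]

lemma T_mul (x : ℚ) : (‖F x‖ : ℂ) * T F x = F x := by
  by_cases hx : F x = 0
  · simp [hx]
  · rw [T, mul_div_cancel₀]
    simpa using hx

lemma T_conj {x : ℚ} (hx : F x ≠ 0) : T F x * (starRingEnd ℂ) (T F x) = 1 := by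
  rw [Complex.mul_conj, Complex.normSq_eq_norm_sq, T_norm hx]; simp

lemma T_neg (h : Sol p n m e F) (x : ℚ) : T F (-x) = (starRingEnd ℂ) (T F x) := by
  simp [T, h.herm]

lemma T_fe (h : Sol p n m e F) (x : ℚ) : T F x = ∏ j, T F (e j * (x / (p : ℚ) ^ m j)) := by
  simp only [T]
  rw [Finset.prod_div_distrib, ← h.fe, ← Complex.ofReal_prod, ← norm_prod, ← h.fe]

lemma tau_fe (h : Sol p n m e F) (x y : ℚ) : tau F x y =
    ∏ j, tau F (e j * (x / (p : ℚ) ^ m j)) (e j * (y / (p : ℚ) ^ m j)) := by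
  simp only [tau]
  rw [Finset.prod_mul_distrib, Finset.prod_mul_distrib, ← map_prod, ← map_prod, ← h.T_fe,
    ← h.T_fe, h.T_fe (x + y)]
  congr 3
  ext j
  congr 1
  ring

lemma tau_norm (h : Sol p n m e F) {x y : ℚ} (hx : F x ≠ 0) (hy : F y ≠ 0) :
    ‖tau F x y‖ = 1 := by
  simp [tau, T_norm hx, T_norm hy, T_norm (h.ne_add hx hy)]

lemma tau_e (h : Sol p n m e F) (j : Fin n) (x y : ℚ) :
    ‖tau F (e j * x) (e j * y) - 1‖ = ‖tau F x y - 1‖ := by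
  rcases h.he j with h1 | h1
  · simp [h1]
  · have : tau F (e j * x) (e j * y) - 1 = (starRingEnd ℂ) (tau F x y - 1) := by
      have e1 : -x + -y = -(x + y) := by ring
      rw [h1, neg_one_mul, neg_one_mul, tau, e1, h.T_neg, h.T_neg, h.T_neg, tau, map_sub, map_mul,
        map_mul, map_one]
    rw [this, RCLike.norm_conj]

lemma ne_e (h : Sol p n m e F) (j : Fin n) {x : ℚ} (hx : F x ≠ 0) : F (e j * x) ≠ 0 := by
  rw [← norm_ne_zero_iff, h.norm_e, norm_ne_zero_iff]; exact hx

lemma tau_sq (h : Sol p n m e F) {x y : ℚ} (hx : F x ≠ 0) (hy : F y ≠ 0) :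
    (‖F (x + y)‖ * (‖F x‖ * ‖F y‖)) * ‖tau F x y - 1‖ ^ 2 ≤
      (1 - ‖F x‖ ^ 2) * (1 - ‖F y‖ ^ 2) - (‖F (x + y)‖ - ‖F x‖ * ‖F y‖) ^ 2 := by
  have h3 := h.three x y
  have hxy := h.ne_add hx hy
  have e1 : F (x + y) - F x * F y = (T F x * T F y) *
      (((‖F (x + y)‖ : ℝ) : ℂ) * tau F x y - ((‖F x‖ * ‖F y‖ : ℝ) : ℂ)) := by
    have a1 := T_mul (F := F) (x + y)
    have a2 := T_mul (F := F) x
    have a3 := T_mul (F := F) y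
    have a4 := T_conj hx
    have a5 := T_conj hy
    have a6 : T F x * T F y * tau F x y = T F (x + y) := by
      rw [tau]
      linear_combination (T F (x + y) * (T F y * (starRingEnd ℂ) (T F y))) * a4
        + T F (x + y) * a5
    push_cast
    linear_combination (-1) * a1 + F y * a2 + (‖F x‖ : ℂ) * T F x * a3
      - ‖F (x + y)‖ * a6
  rw [e1, norm_mul, norm_mul, T_norm hx, T_norm hy, one_mul, one_mul] at h3
  have ht := h.tau_norm hx hy
  have ht2 : ‖tau F x y‖ ^ 2 = 1 := by rw [ht]; norm_num
  set A := ‖F (x + y)‖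
  set B := ‖F x‖ * ‖F y‖
  set z := tau F x y
  rw [← Complex.normSq_eq_norm_sq, Complex.normSq_apply] at h3 ht2 ⊢
  simp at h3 ⊢
  have : A * B * ((z.re - 1) * (z.re - 1) + z.im * z.im) =
      ((A * z.re - B) * (A * z.re - B) + A * z.im * (A * z.im)) - (A - B) ^ 2 := by
    linear_combination (A * B - A ^ 2) * ht2
  linarith

lemma tau_bound (h : Sol p n m e F) {x y : ℚ} (hx : F x ≠ 0) (hy : F y ≠ 0) :
    ∃ K : ℝ, 0 ≤ K ∧ ∀ k : ℕ,
      ‖tau F (x / (p : ℚ) ^ k) (y / (p : ℚ) ^ k) - 1‖ ≤ K / ((p : ℝ) ^ 3) ^ k := by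
  obtain ⟨σ, hσ, hN⟩ := h.norm_eq
  set c := ‖F (x + y)‖ * (‖F x‖ * ‖F y‖) with hc
  have hc0 : 0 < c := by
    have a1 := norm_pos_iff.2 hx
    have a2 := norm_pos_iff.2 hy
    have a3 := norm_pos_iff.2 (h.ne_add hx hy)
    positivity
  set X : ℝ := 2 * σ * (x : ℝ) ^ 2 with hX
  set Y : ℝ := 2 * σ * (y : ℝ) ^ 2 with hY
  set Z : ℝ := 2 * σ * ((x : ℝ) * y) with hZ
  have hX0 : 0 ≤ X := by positivity
  have hY0 : 0 ≤ Y := by positivity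
  set R : ℝ := Z ^ 2 * (X + Y + 2 * |Z|) with hR
  have hR0 : 0 ≤ R := by positivity
  refine ⟨Real.sqrt (R / c), Real.sqrt_nonneg _, fun k => ?_⟩
  have hp2 : (2 : ℝ) ≤ p := by exact_mod_cast h.hp
  set s : ℝ := (p : ℝ) ^ k with hs
  have hs1 : 1 ≤ s := one_le_pow₀ (by linarith)
  have hs0 : 0 < s := by linarith
  have hxk := (h.level' hx).1 k
  have hyk := (h.level' hy).1 k
  have hxyk := h.ne_add hxk hyk
  have hsq := h.tau_sq hxk hyk
  have cx : ((x / (p : ℚ) ^ k : ℚ) : ℝ) = x / s := by simp [hs]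
  have cy : ((y / (p : ℚ) ^ k : ℚ) : ℝ) = y / s := by simp [hs]
  have nx := hN _ hxk
  have ny := hN _ hyk
  have nxy := hN _ hxyk
  rw [Rat.cast_add, cx, cy] at nxy
  rw [cx] at nx
  rw [cy] at ny
  have key := real_ineq (X / s ^ 2) (Y / s ^ 2) (Z / s ^ 2) (by positivity) (by positivity)
    (by rw [hX, hY, hZ]; field_simp)
  have nB : ‖F (x / (p : ℚ) ^ k)‖ * ‖F (y / (p : ℚ) ^ k)‖ =
      Real.exp (-(X / s ^ 2 + Y / s ^ 2) / 2) := by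
    rw [nx, ny, ← Real.exp_add]; congr 1; rw [hX, hY]; field_simp; ring
  have nA : ‖F (x / (p : ℚ) ^ k + y / (p : ℚ) ^ k)‖ =
      Real.exp (-(X / s ^ 2 + Y / s ^ 2) / 2 - Z / s ^ 2) := by
    rw [nxy]; congr 1; rw [hX, hY, hZ]; field_simp; ring
  have nX : ‖F (x / (p : ℚ) ^ k)‖ ^ 2 = Real.exp (-(X / s ^ 2)) := by
    rw [nx, ← Real.exp_nat_mul]; congr 1; rw [hX]; push_cast; field_simp
  have nY : ‖F (y / (p : ℚ) ^ k)‖ ^ 2 = Real.exp (-(Y / s ^ 2)) := by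
    rw [ny, ← Real.exp_nat_mul]; congr 1; rw [hY]; push_cast; field_simp
  have hR' : (Z / s ^ 2) ^ 2 * (X / s ^ 2 + Y / s ^ 2 + 2 * |Z / s ^ 2|) = R / s ^ 6 := by
    rw [abs_div, abs_of_pos (by positivity : 0 < s ^ 2), hR]; field_simp
  have hcle : c ≤ ‖F (x / (p : ℚ) ^ k + y / (p : ℚ) ^ k)‖ *
      (‖F (x / (p : ℚ) ^ k)‖ * ‖F (y / (p : ℚ) ^ k)‖) := by
    have hle : ∀ z : ℝ, Real.exp (-σ * z ^ 2) ≤ Real.exp (-σ * (z / s) ^ 2) := by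
      intro z
      apply Real.exp_le_exp.2
      have : (z / s) ^ 2 ≤ z ^ 2 := by
        rw [div_pow]
        exact div_le_self (sq_nonneg _) (one_le_pow₀ hs1)
      nlinarith
    rw [hc, hN _ (h.ne_add hx hy), hN _ hx, hN _ hy, nx, ny, nxy, ← add_div, Rat.cast_add]
    have := hle x
    have := hle y
    have := hle (x + y)
    gcongr
  have h7 : c * ‖tau F (x / (p : ℚ) ^ k) (y / (p : ℚ) ^ k) - 1‖ ^ 2 ≤ R / s ^ 6 := by
    refine (mul_le_mul_of_nonneg_right hcle (sq_nonneg _)).trans (hsq.trans ?_)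
    rw [nX, nY, nB, nA, ← hR']
    exact key
  have h8 : ((p : ℝ) ^ 3) ^ k = s ^ 3 := by rw [hs, ← pow_mul, ← pow_mul, mul_comm]
  rw [h8, ← sq_le_sq₀ (norm_nonneg _) (by positivity), div_pow, Real.sq_sqrt (by positivity),
    div_div, ← pow_mul, le_div_iff₀ (by positivity)]
  rw [le_div_iff₀ (by positivity)] at h7
  norm_num
  linarith

lemma tau_one (h : Sol p n m e F) {x y : ℚ} (hx : F x ≠ 0) (hy : F y ≠ 0) :
    tau F x y = 1 := by
  obtain ⟨K, hK0, hK⟩ := h.tau_bound hx hy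
  have hp2 : (2 : ℝ) ≤ p := by exact_mod_cast h.hp
  have hb : ∀ i k : ℕ, ‖tau F (x / (p : ℚ) ^ k) (y / (p : ℚ) ^ k) - 1‖ ≤
      K / 2 ^ i / ((p : ℝ) ^ 3) ^ k := by
    intro i
    induction i with
    | zero => simpa using hK
    | succ i ih =>
      intro k
      rw [h.tau_fe]
      refine (norm_prod_sub_one_le _ _ fun j => ?_).trans ?_
      · apply h.tau_norm <;> apply h.ne_e <;> rw [div_div, ← pow_add]
        · exact (h.level' hx).1 _
        · exact (h.level' hy).1 _
      · have hj : ∀ j, ‖tau F (e j * (x / (p : ℚ) ^ k / (p : ℚ) ^ m j))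
            (e j * (y / (p : ℚ) ^ k / (p : ℚ) ^ m j)) - 1‖ ≤
            K / 2 ^ (i + 1) / ((p : ℝ) ^ 3) ^ k * (((p : ℝ) ^ 2) ^ m j)⁻¹ := by
          intro j
          rw [h.tau_e, div_div, ← pow_add, div_div, ← pow_add]
          refine (ih _).trans ?_
          have e1 : ((p : ℝ) ^ 3) ^ (k + m j) =
              ((p : ℝ) ^ 3) ^ k * (((p : ℝ) ^ 2) ^ m j * (p : ℝ) ^ m j) := by
            rw [pow_add, ← mul_pow]; ring
          have e2 : (2 : ℝ) ≤ (p : ℝ) ^ m j :=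
            hp2.trans (le_self_pow₀ (by linarith) (by have := h.hm j; omega))
          rw [e1, ← div_eq_mul_inv, div_div, div_div, div_div, pow_succ (2 : ℝ) i]
          apply div_le_div_of_nonneg_left hK0 (by positivity)
          have : 0 ≤ (2 : ℝ) ^ i * (((p : ℝ) ^ 3) ^ k * ((p : ℝ) ^ 2) ^ m j) := by positivity
          nlinarith [mul_le_mul_of_nonneg_left e2 this]
        refine (Finset.sum_le_sum fun j _ => hj j).trans ?_
        rw [← Finset.mul_sum, h.hs, mul_one]
  have h0 : ∀ i : ℕ, ‖tau F x y - 1‖ ≤ K * (1 / 2) ^ i := by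
    intro i
    have := hb i 0
    simpa [div_eq_mul_inv] using this
  have hlim : Filter.Tendsto (fun i : ℕ => K * (1 / 2 : ℝ) ^ i) Filter.atTop (nhds 0) := by
    simpa using (tendsto_pow_atTop_nhds_zero_of_lt_one (by norm_num : (0 : ℝ) ≤ 1 / 2)
      (by norm_num)).const_mul K
  have := ge_of_tendsto' hlim h0
  exact sub_eq_zero.1 (norm_le_zero_iff.1 this)

lemma T_add (h : Sol p n m e F) {x y : ℚ} (hx : F x ≠ 0) (hy : F y ≠ 0) :
    T F (x + y) = T F x * T F y := by
  have h1 := h.tau_one hx hy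
  rw [tau] at h1
  have a4 := T_conj hx
  have a5 := T_conj hy
  linear_combination (T F x * T F y) * h1
    - (T F (x + y) * (T F y * (starRingEnd ℂ) (T F y))) * a4 - T F (x + y) * a5

end Sol

/-- Characters extend from subgroups, since the circle is divisible. -/
lemma extend_char (E : AddSubgroup ℚ) (t : E → Circle) (ht : ∀ x y, t (x + y) = t x * t y) :
    ∃ χ : AddChar ℚ Circle, ∀ x : E, χ x = t x := by
  let D : DivisibleBy (Additive Circle) ℤ := divisibleByOfSMulRightSurj _ _ (by
    intro k hk a
    refine ⟨Additive.ofMul (Circle.exp (Complex.arg (a.toMul : ℂ) / k)), ?_⟩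
    apply Additive.toMul.injective
    simp only [toMul_zsmul, toMul_ofMul]
    rw [← Circle.exp_zsmul]
    have hk' : (k : ℝ) ≠ 0 := by exact_mod_cast hk
    rw [zsmul_eq_mul, mul_div_cancel₀ _ hk', Circle.exp_arg])
  let g : E →+ Additive Circle := AddMonoidHom.mk' (fun x => Additive.ofMul (t x))
    (fun x y => by simp [ht])
  obtain ⟨φ, hφ⟩ := (Module.Baer.of_divisible (Additive Circle)).extension_property_addMonoidHom
    E.subtype E.subtype_injective g
  refine ⟨AddChar.toAddMonoidHomEquiv.symm φ, fun x => ?_⟩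
  have := DFunLike.congr_fun hφ x
  simpa [g] using congrArg Additive.toMul this

end PolyaAux
namespace PolyaAux

lemma num_dvd {r : ℚ} {Y : AddSubgroup ℚ} (hr : ratSMul r Y = (Y : Set ℚ)) {q : ℕ}
    (hq : q.Prime) (hd : (q : ℤ) ∣ r.num) : ratSMul (q : ℚ) Y = (Y : Set ℚ) := by
  have hq0 : (q : ℚ) ≠ 0 := by exact_mod_cast hq.ne_zero
  ext y
  constructor
  · rintro ⟨z, hz, rfl⟩
    have := Y.nsmul_mem hz q
    rwa [nsmul_eq_mul] at this
  · intro hy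
    refine ⟨y / q, ?_, by field_simp⟩
    have hy' : y ∈ ratSMul r Y := by rw [hr]; exact hy
    obtain ⟨z, hz, hzy⟩ := hy'
    dsimp only at hzy
    obtain ⟨c, hc⟩ := hd
    have hcop : IsCoprime (q : ℤ) (r.den : ℤ) := by
      rw [Nat.isCoprime_iff_coprime]
      have h1 := r.reduced
      rw [hc, Int.natAbs_mul, Int.natAbs_natCast] at h1
      exact Nat.Coprime.coprime_mul_right h1
    obtain ⟨u, v, huv⟩ := hcop
    have hden : (r.den : ℚ) ≠ 0 := by exact_mod_cast r.den_ne_zero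
    have h2 : (r.den : ℚ) * y = q * (c * z) := by
      have : r * r.den = q * c := by
        rw [Rat.mul_den_eq_num, hc]; push_cast; ring
      rw [← hzy]
      linear_combination z * this
    have h3 : y / q = u * y + v * (c * z) := by
      have huv' : (u : ℚ) * q + v * r.den = 1 := by exact_mod_cast huv
      rw [div_eq_iff hq0]
      linear_combination (-y) * huv' + v * h2
    have h4 : u • y + v • (c • z) ∈ Y :=
      Y.add_mem (Y.zsmul_mem hy u) (Y.zsmul_mem (Y.zsmul_mem hz c) v)
    simp only [zsmul_eq_mul] at h4
    show y / q ∈ Y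
    rw [h3]; exact h4

lemma ratSMul_inv {r : ℚ} (hr0 : r ≠ 0) {Y : AddSubgroup ℚ}
    (hr : ratSMul r Y = (Y : Set ℚ)) : ratSMul r⁻¹ Y = (Y : Set ℚ) := by
  ext y
  constructor
  · rintro ⟨z, hz, rfl⟩
    rw [← hr] at hz
    obtain ⟨w, hw, rfl⟩ := hz
    simpa [hr0] using hw
  · intro hy
    refine ⟨r * y, ?_, by simp [hr0]⟩
    rw [← hr]
    exact ⟨y, hy, rfl⟩

lemma num_pow {p : ℕ} {r : ℚ} (hr0 : r ≠ 0) {Y : AddSubgroup ℚ}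
    (hr : ratSMul r Y = (Y : Set ℚ))
    (hqY : ∀ q : ℕ, q.Prime → q ≠ p → ratSMul (q : ℚ) Y ≠ (Y : Set ℚ)) :
    ∃ i : ℕ, r.num.natAbs = p ^ i := by
  refine ⟨_, Nat.eq_prime_pow_of_unique_prime_dvd (by simpa using hr0) ?_⟩
  intro d hd hdvd
  by_contra hne
  exact hqY d hd hne (num_dvd hr hd (Int.natCast_dvd.2 hdvd))

lemma rat_form {p : ℕ} (hp : p.Prime) {r : ℚ} (hr0 : r ≠ 0) {Y : AddSubgroup ℚ}
    (hr : ratSMul r Y = (Y : Set ℚ))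
    (hqY : ∀ q : ℕ, q.Prime → q ≠ p → ratSMul (q : ℚ) Y ≠ (Y : Set ℚ)) (hlt : r ^ 2 < 1) :
    ∃ (m : ℕ) (e : ℚ), 1 ≤ m ∧ (e = 1 ∨ e = -1) ∧ r = e * (1 / (p : ℚ) ^ m) := by
  obtain ⟨i, hi⟩ := num_pow hr0 hr hqY
  obtain ⟨j, hj⟩ := num_pow (inv_ne_zero hr0) (ratSMul_inv hr0 hr) hqY
  have hp0 : (p : ℚ) ≠ 0 := by exact_mod_cast hp.ne_zero
  have hp1 : (1 : ℚ) < p := by exact_mod_cast hp.one_lt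
  have habs : ∀ x : ℚ, |x| = (x.num.natAbs : ℚ) / x.den := by
    intro x
    conv_lhs => rw [← Rat.num_div_den x]
    rw [abs_div, Nat.abs_cast, Nat.cast_natAbs, Int.cast_abs]
  have hjden : r.den = p ^ j := by
    rw [← hj, Rat.num_inv, Int.natAbs_mul, Int.natAbs_natCast, Int.natAbs_sign_of_ne_zero,
      one_mul]
    simpa using hr0
  have h1 : |r| = (p : ℚ) ^ i / (p : ℚ) ^ j := by
    rw [habs, hi, hjden]; push_cast; rfl
  have h2 : |r| < 1 := by
    rw [← sq_lt_one_iff₀ (abs_nonneg _), sq_abs]; exact hlt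
  have hij : i < j := by
    rw [h1, div_lt_one (by positivity)] at h2
    exact (pow_lt_pow_iff_right₀ hp1).1 h2
  obtain ⟨d, hd⟩ := Nat.exists_eq_add_of_lt hij
  have h3 : |r| = 1 / (p : ℚ) ^ (d + 1) := by
    rw [h1, hd, add_assoc, pow_add]; field_simp
  rcases abs_choice r with h4 | h4
  · exact ⟨d + 1, 1, by omega, Or.inl rfl, by rw [one_mul, ← h3, h4]⟩
  · exact ⟨d + 1, -1, by omega, Or.inr rfl, by rw [← h3, h4]; ring⟩

open Classical in
/-- Extension by zero. -/
noncomputable def ext0 (Y : AddSubgroup ℚ) (f : Y → ℂ) (q : ℚ) : ℂ :=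
  if h : q ∈ Y then f ⟨q, h⟩ else 0

lemma ext0_mem {Y : AddSubgroup ℚ} (f : Y → ℂ) {q : ℚ} (h : q ∈ Y) :
    ext0 Y f q = f ⟨q, h⟩ := dif_pos h

lemma ext0_not {Y : AddSubgroup ℚ} (f : Y → ℂ) {q : ℚ} (h : q ∉ Y) :
    ext0 Y f q = 0 := dif_neg h

end PolyaAux

/-- The dual (Bochner) formulation of the generalized Pólya theorem on `a`-adic solenoids
satisfying condition (i): the positive definite solutions of
`f(y) = ∏ⱼ f(rⱼ y)` are of Gauss–Haar form. -/
theorem generalized_polya_solenoid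
    (p : ℕ) (hp : p.Prime) (Y : AddSubgroup ℚ) (hY : Y ≠ ⊥)
    (hpY : ratSMul (p : ℚ) Y = (Y : Set ℚ))
    (hqY : ∀ q : ℕ, q.Prime → q ≠ p → ratSMul (q : ℚ) Y ≠ (Y : Set ℚ))
    (n : ℕ) (hn : 2 ≤ n) (r : Fin n → ℚ) (hr0 : ∀ j, r j ≠ 0)
    (hrY : ∀ j, ratSMul (r j) Y = (Y : Set ℚ))
    (hsum : ∑ j, (r j) ^ 2 = 1)
    (f : Y → ℂ) (hpd : IsPositiveDefinite f) (hf0 : f 0 = 1)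
    (hmem : ∀ (j : Fin n) (y : Y), r j * (y : ℚ) ∈ Y)
    (heq : ∀ y : Y, f y = ∏ j, f ⟨r j * (y : ℚ), hmem j y⟩) :
    ∃ (σ : ℝ), 0 ≤ σ ∧
      ∃ (E : AddSubgroup ℚ), E ≤ Y ∧
        (∀ y : ℚ, y ∈ Y → (y ∈ E ↔ (p : ℚ) * y ∈ E)) ∧
        ∃ (χ : AddChar Y Circle),
          (∀ y : Y, (y : ℚ) ∈ E →
              f y = (χ y : ℂ) * Complex.exp (-(σ : ℂ) * ((y : ℚ) : ℂ) ^ 2)) ∧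
          (∀ y : Y, (y : ℚ) ∉ E → f y = 0) := by
  classical
  have hlt : ∀ j, r j ^ 2 < 1 := by
    intro j
    rw [← hsum, ← Finset.add_sum_erase Finset.univ _ (Finset.mem_univ j)]
    have : 0 < ∑ i ∈ Finset.univ.erase j, r i ^ 2 := by
      apply Finset.sum_pos
      · intro i _
        have := hr0 i
        positivity
      · rw [← Finset.card_pos, Finset.card_erase_of_mem (Finset.mem_univ j)]
        simp; omega
    linarith
  choose m e hm he hre using fun j => PolyaAux.rat_form hp (hr0 j) (hrY j) hqY (hlt j)
  have hmem' : ∀ (j : Fin n) (y : ℚ), r j * y ∈ Y → y ∈ Y := by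
    intro j y hy
    have : r j * y ∈ ratSMul (r j) Y := by rw [hrY j]; exact hy
    obtain ⟨z, hz, hzy⟩ := this
    rwa [← mul_left_cancel₀ (hr0 j) hzy]
  set F := PolyaAux.ext0 Y f with hF
  have hnorm : ∀ x, ‖F x‖ ^ 2 ≤ 1 := by
    intro x
    by_cases hx : x ∈ Y
    · rw [hF, PolyaAux.ext0_mem f hx]; exact PolyaAux.pd_norm hpd hf0 _
    · rw [hF, PolyaAux.ext0_not f hx]; simp
  have hsol : PolyaAux.Sol p n m e F := by
    refine ⟨hp.two_le, hn, hm, he, ?_, ?_, ?_, hnorm, ?_, ?_⟩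
    · have h1 : ∑ j, (((p : ℚ) ^ 2) ^ m j)⁻¹ = 1 := by
        rw [← hsum]
        refine Finset.sum_congr rfl fun j _ => ?_
        rw [hre j, mul_pow]
        have : e j ^ 2 = 1 := by rcases he j with h | h <;> rw [h] <;> norm_num
        rw [this, one_mul, one_div, inv_pow, ← pow_mul, ← pow_mul, mul_comm]
      have h2 := congrArg (fun q : ℚ => (q : ℝ)) h1
      push_cast at h2
      exact h2
    · rw [hF, PolyaAux.ext0_mem f Y.zero_mem]; exact hf0
    · intro x
      by_cases hx : x ∈ Y
      · rw [hF, PolyaAux.ext0_mem f hx, PolyaAux.ext0_mem f (Y.neg_mem hx),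
          ← PolyaAux.pd_herm hpd hf0]
        rfl
      · rw [hF, PolyaAux.ext0_not f hx, PolyaAux.ext0_not f (by simpa using hx)]; simp
    · intro x y
      by_cases hx : x ∈ Y <;> by_cases hy : y ∈ Y
      · rw [hF, PolyaAux.ext0_mem f hx, PolyaAux.ext0_mem f hy,
          PolyaAux.ext0_mem f (Y.add_mem hx hy)]
        exact PolyaAux.pd_three hpd hf0 ⟨x, hx⟩ ⟨y, hy⟩
      · have hxy : x + y ∉ Y := fun h => hy ((Y.add_mem_cancel_left hx).1 h)
        have e1 : F y = 0 := PolyaAux.ext0_not f hy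
        have e2 : F (x + y) = 0 := PolyaAux.ext0_not f hxy
        have := hnorm x
        simp [e1, e2] at this ⊢
        exact this
      · have hxy : x + y ∉ Y := fun h => hx ((Y.add_mem_cancel_right hy).1 h)
        have e1 : F x = 0 := PolyaAux.ext0_not f hx
        have e2 : F (x + y) = 0 := PolyaAux.ext0_not f hxy
        have := hnorm y
        simp [e1, e2] at this ⊢
        exact this
      · have e1 : F x = 0 := PolyaAux.ext0_not f hx
        have e2 : F y = 0 := PolyaAux.ext0_not f hy
        have := hnorm (x + y)
        simp [e1, e2] at this ⊢
        exact this
    · intro x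
      have hx' : ∀ j, e j * (x / (p : ℚ) ^ m j) = r j * x := by
        intro j; rw [hre j]; ring
      simp only [hx']
      by_cases hx : x ∈ Y
      · rw [hF, PolyaAux.ext0_mem f hx, heq ⟨x, hx⟩]
        refine Finset.prod_congr rfl fun j _ => ?_
        rw [PolyaAux.ext0_mem f (hmem j ⟨x, hx⟩)]
      · have e1 : F x = 0 := PolyaAux.ext0_not f hx
        rw [e1]
        symm
        refine Finset.prod_eq_zero (Finset.mem_univ (⟨0, by omega⟩ : Fin n)) ?_
        exact PolyaAux.ext0_not f fun h => hx (hmem' _ _ h)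
  obtain ⟨σ, hσ, hN⟩ := hsol.norm_eq
  obtain ⟨χ, hχ⟩ := PolyaAux.extend_char hsol.E
    (fun x => ⟨PolyaAux.T F x, by
      simpa [Submonoid.unitSphere] using PolyaAux.Sol.T_norm x.2⟩)
    (fun x y => Circle.ext (hsol.T_add x.2 y.2))
  refine ⟨σ, hσ, hsol.E, ?_, fun y _ => hsol.ne_mul y, χ.compAddMonoidHom Y.subtype, ?_, ?_⟩
  · intro y hy
    by_contra hc
    exact hy (PolyaAux.ext0_not f hc)
  · intro y hy
    have h1 := congrArg (fun z : Circle => (z : ℂ)) (hχ ⟨y, hy⟩)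
    have h2 : f y = F y := (PolyaAux.ext0_mem f y.2).symm
    dsimp only at h1
    have h3 : ((χ.compAddMonoidHom Y.subtype y : Circle) : ℂ) = PolyaAux.T F y := h1
    have h4 := PolyaAux.Sol.T_mul (F := F) y
    rw [hN y hy, Complex.ofReal_exp] at h4
    rw [h3, h2, mul_comm]
    refine h4.symm.trans ?_
    push_cast
    rfl
  · intro y hy
    have h2 : f y = F y := (PolyaAux.ext0_mem f y.2).symm
    rw [h2]
    by_contra hc
    exact hy hc
end

section
/- Let p be a prime number and let Y be a nontrivial additive subgroup of ℚ such that p·Y = Y and q·Y ≠ Y for every prime q ≠ p. Let n ≥ 2 and let r_1, …, r_n be nonzero rational numbers such that r_j·Y = Y for each j and r_1² + ⋯ + r_n² = 1. Let f : Y → ℂ be a positive definite function with f(0) = 1 satisfying f(y) = ∏_{j=1}^n f(r_j y) for all y ∈ Y, and suppose in addition that f(y) ≠ 0 for all y ∈ Y. Then there exist a real number σ ≥ 0 and a character χ of Y such that f(y) = χ(y)·exp(−σ y²) for all y ∈ Y. -/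
open scoped BigOperators

/-! ### Part A: GNS and basic inequalities -/

open ComplexConjugate in
lemma pd_conj {G : Type*} [AddCommGroup G] {f : G → ℂ} (hpd : IsPositiveDefinite f)
    (x : G) : f (-x) = conj (f x) := by
  obtain ⟨t0, -, h0⟩ := hpd 1 ![0] ![1]
  obtain ⟨t1, -, h1⟩ := hpd 2 ![x, 0] ![1, 1]
  obtain ⟨t2, -, h2⟩ := hpd 2 ![x, 0] ![1, Complex.I]
  simp [Fin.sum_univ_succ] at h0 h1 h2
  rw [h0] at h1 h2
  have a1 := congrArg Complex.im h1
  have a2 := congrArg Complex.im h2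
  simp at a1 a2
  apply Complex.ext
  · simp; linarith
  · simp; linarith

open ComplexConjugate in
lemma pd_finsupp {G : Type*} [AddCommGroup G] {f : G → ℂ} (hpd : IsPositiveDefinite f)
    (v : G →₀ ℂ) : 0 ≤ (v.sum fun x a => v.sum fun y b => conj a * b * f (y - x)).re := by
  let e := v.support.equivFin.symm
  obtain ⟨t, ht, h⟩ := hpd v.support.card (fun i => (e i : G)) (fun i => v (e i))
  have : (v.sum fun x a => v.sum fun y b => conj a * b * f (y - x)) = (t : ℂ) := by
    rw [← h, Finset.sum_comm]
    simp only [Finsupp.sum]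
    rw [← Finset.sum_coe_sort, ← Equiv.sum_comp e]
    refine Finset.sum_congr rfl fun i _ => ?_
    rw [← Finset.sum_coe_sort, ← Equiv.sum_comp e]
    refine Finset.sum_congr rfl fun j _ => ?_
    ring
  rw [this]; simpa using ht

open ComplexConjugate in
lemma gns {G : Type} [AddCommGroup G] {f : G → ℂ} (hpd : IsPositiveDefinite f) :
    ∃ (H : Type) (_ : SeminormedAddCommGroup H) (_ : InnerProductSpace ℂ H) (e : G → H),
      ∀ x y, inner ℂ (e x) (e y) = f (y - x) := by
  let c : PreInnerProductSpace.Core ℂ (G →₀ ℂ) :=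
    { inner := fun v w => v.sum fun x a => w.sum fun y b => conj a * b * f (y - x)
      conj_inner_symm := by
        intro v w
        change conj (w.sum fun x a => v.sum fun y b => conj a * b * f (y - x)) =
          v.sum fun x a => w.sum fun y b => conj a * b * f (y - x)
        rw [Finsupp.sum_comm]
        simp only [Finsupp.sum, map_sum, map_mul, Complex.conj_conj]
        refine Finset.sum_congr rfl fun i _ => Finset.sum_congr rfl fun j _ => ?_
        rw [← pd_conj hpd, neg_sub]; ring
      re_inner_nonneg := fun v => pd_finsupp hpd v
      add_left := by
        intro v w z
        change ((v + w).sum fun x a => z.sum fun y b => conj a * b * f (y - x)) =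
          (v.sum fun x a => z.sum fun y b => conj a * b * f (y - x)) +
          (w.sum fun x a => z.sum fun y b => conj a * b * f (y - x))
        apply Finsupp.sum_add_index'
        · intro a; simp
        · intro a b₁ b₂; simp [Finsupp.sum, add_mul, Finset.sum_add_distrib]
      smul_left := by
        intro v w r
        change ((r • v).sum fun x a => w.sum fun y b => conj a * b * f (y - x)) =
          conj r * (v.sum fun x a => w.sum fun y b => conj a * b * f (y - x))
        rw [Finsupp.sum_smul_index']
        · simp only [Finsupp.sum, Finset.mul_sum, smul_eq_mul, map_mul, mul_assoc]
        · intro i; simp }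
  refine ⟨G →₀ ℂ, @InnerProductSpace.Core.toSeminormedAddCommGroup ℂ _ _ _ _ c, ?_, fun x => Finsupp.single x 1, ?_⟩
  · exact InnerProductSpace.ofCore c
  · intro x y
    change ((Finsupp.single x (1 : ℂ)).sum fun x a => (Finsupp.single y (1 : ℂ)).sum fun y b =>
      conj a * b * f (y - x)) = _
    simp

lemma nsq {H : Type} [SeminormedAddCommGroup H] [InnerProductSpace ℂ H] (v : H) :
    (((‖v‖ : ℝ) : ℂ)) ^ 2 = inner ℂ v v := by
  have h : inner ℂ v v = (((‖v‖ : ℝ) : ℂ)) ^ 2 := inner_self_eq_norm_sq_to_K (𝕜 := ℂ) v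
  exact h.symm

open ComplexConjugate in
lemma pd_neg_of {G : Type} [AddCommGroup G] {f : G → ℂ} (hpd : IsPositiveDefinite f)
    (x : G) (α : ℂ) (hx : f x = α * ‖f x‖) : f (-x) = conj α * ‖f x‖ := by
  have := congrArg conj hx
  rw [map_mul, Complex.conj_ofReal] at this
  rw [pd_conj hpd, this]

open ComplexConjugate in
lemma pd_tri {G : Type} [AddCommGroup G] {f : G → ℂ} (hpd : IsPositiveDefinite f) (hf0 : f 0 = 1)
    (x y : G) (α β : ℂ) (hα : conj α * α = 1) (hβ : conj β * β = 1) :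
    √(1 - (conj α * conj β * f (x + y)).re) ≤
      √(1 - (conj α * f x).re) + √(1 - (conj β * f y).re) := by
  obtain ⟨H, i1, i2, e, he⟩ := gns hpd
  have key : ∀ (a b : ℂ) (u v : G), conj a * a = 1 → conj b * b = 1 →
      √2 * √(1 - (conj b * a * f (u - v)).re) = ‖a • e u - b • e v‖ := by
    intro a b u v ha hb
    rw [← Real.sqrt_mul (by norm_num), ← Real.sqrt_sq (norm_nonneg (a • e u - b • e v))]
    congr 1
    have h : ((‖a • e u - b • e v‖ ^ 2 : ℝ) : ℂ) =
        2 - conj b * a * f (u - v) - conj (conj b * a * f (u - v)) := by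
      push_cast
      rw [nsq]
      simp only [inner_sub_left, inner_sub_right, inner_smul_left, inner_smul_right, he, sub_self,
        hf0, map_mul, Complex.conj_conj, ← pd_conj hpd, neg_sub]
      linear_combination ha + hb
    have h2 := congrArg Complex.re h
    rw [Complex.ofReal_re] at h2
    rw [h2, Complex.sub_re, Complex.sub_re, Complex.conj_re]
    simp only [Complex.re_ofNat]; ring
  have h := norm_add_le ((conj α * conj β) • e (x + y) - conj β • e y)
    (conj β • e y - (1:ℂ) • e 0)
  rw [sub_add_sub_cancel, ← key, ← key, ← key, ← mul_add] at h
  · have h2 := le_of_mul_le_mul_left h (by positivity)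
    simp only [map_one, one_mul, sub_zero, Complex.conj_conj, add_sub_cancel_right] at h2
    have h3 : β * (conj α * conj β) * f x = conj α * f x := by
      linear_combination (conj α * f x) * hβ
    rwa [h3] at h2
  all_goals simp only [map_mul, Complex.conj_conj, map_one, one_mul]
  all_goals first
    | linear_combination hβ
    | linear_combination conj β * β * hα + hβ

open ComplexConjugate in
lemma pd_im {G : Type} [AddCommGroup G] {f : G → ℂ} (hpd : IsPositiveDefinite f) (hf0 : f 0 = 1)
    (x y : G) (α β : ℂ) (hα : conj α * α = 1) (hβ : conj β * β = 1)
    (hx : f x = α * ‖f x‖) (hy : f y = β * ‖f y‖)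
    (cx sx cy sy : ℝ) (hcx0 : 0 ≤ cx) (hsx0 : 0 ≤ sx) (hcy0 : 0 ≤ cy) (hsy0 : 0 ≤ sy)
    (hcx : 2 - 2 * ‖f x‖ - (1 - ‖f (x + x)‖) / 2 ≤ cx ^ 2) (hsx : 8 * (1 - ‖f x‖) ≤ sx ^ 2)
    (hcy : 2 - 2 * ‖f y‖ - (1 - ‖f (y + y)‖) / 2 ≤ cy ^ 2) (hsy : 8 * (1 - ‖f y‖) ≤ sy ^ 2) :
    2 * |(conj α * conj β * f (x + y)).im| ≤ cx * sy + cy * sx := by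
  obtain ⟨H, i1, i2, e, he⟩ := gns hpd
  let C : ℂ → G → H := fun a u => e 0 - (conj a / 2) • e u - (a / 2) • e (-u)
  let S : ℂ → G → H := fun a u => conj a • e u - a • e (-u)
  have hS : ∀ (a : ℂ) (u : G), conj a * a = 1 →
      ‖S a u‖ ^ 2 = 2 - 2 * (conj a * conj a * f (u + u)).re := by
    intro a u ha
    have h : ((‖S a u‖ ^ 2 : ℝ) : ℂ) =
        2 - conj a * conj a * f (u + u) - conj (conj a * conj a * f (u + u)) := by
      push_cast
      rw [nsq]
      simp only [S, inner_sub_left, inner_sub_right, inner_smul_left, inner_smul_right, he,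
        sub_self, hf0, map_mul, Complex.conj_conj, ← pd_conj hpd, sub_neg_eq_add, neg_add,
        ← sub_eq_add_neg]
      linear_combination 2 * ha
    have h2 := congrArg Complex.re h
    rw [Complex.ofReal_re] at h2
    rw [h2, Complex.sub_re, Complex.sub_re, Complex.conj_re]
    simp only [Complex.re_ofNat]; ring
  have hC : ∀ (a : ℂ) (u : G), conj a * a = 1 → f u = a * ‖f u‖ →
      ‖C a u‖ ^ 2 + ‖S a u‖ ^ 2 / 4 = 2 - 2 * ‖f u‖ := by
    intro a u ha hu
    have hu' := pd_neg_of hpd u a hu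
    have h : ((‖C a u‖ ^ 2 + ‖S a u‖ ^ 2 / 4 : ℝ) : ℂ) = 2 - 2 * ‖f u‖ := by
      push_cast
      rw [nsq, nsq]
      simp only [S, C, inner_sub_left, inner_sub_right, inner_smul_left, inner_smul_right, he,
        sub_self, hf0, Complex.conj_conj, sub_neg_eq_add, map_div₀, map_ofNat, sub_zero, zero_sub, zero_add, hu']
      generalize (‖f u‖ : ℂ) = m at *
      rw [hu]
      linear_combination (1 - 2 * m) * ha
    exact_mod_cast h
  have hI : inner ℂ (C α x) (S β y) + inner ℂ (C β y) (S α x) =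
      conj (conj α * conj β * f (x + y)) - conj α * conj β * f (x + y) := by
    have hx' := pd_neg_of hpd x α hx
    have hy' := pd_neg_of hpd y β hy
    have e1 : -y - x = -(x + y) := by abel
    have e2 : -x - y = -(x + y) := by abel
    have e3 : -x + y = y - x := by abel
    have e4 : -y + x = x - y := by abel
    have e5 : y + x = x + y := by abel
    simp only [S, C, inner_sub_left, inner_sub_right, inner_smul_left, inner_smul_right, he,
        map_mul, Complex.conj_conj, sub_neg_eq_add, map_div₀, map_ofNat,
        sub_zero, ← pd_conj hpd, hx', hy', e1, e2, e3, e4, e5]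
    generalize (‖f x‖ : ℂ) = m at *
    generalize (‖f y‖ : ℂ) = m' at *
    rw [hx, hy]
    ring
  have hIm : 2 * |(conj α * conj β * f (x + y)).im| =
      ‖inner ℂ (C α x) (S β y) + inner ℂ (C β y) (S α x)‖ := by
    rw [hI]
    generalize conj α * conj β * f (x + y) = z
    have : conj z - z = ((-2 * z.im : ℝ) : ℂ) * Complex.I := by
      apply Complex.ext
      · simp
      · simp; ring
    rw [this, norm_mul, Complex.norm_I, Complex.norm_real, Real.norm_eq_abs, abs_mul]
    norm_num
  have hun : ∀ a : ℂ, conj a * a = 1 → ‖a‖ = 1 := by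
    intro a ha
    have := congrArg norm ha
    rw [norm_mul, RCLike.norm_conj, norm_one] at this
    nlinarith [norm_nonneg a]
  have bS : ∀ (a : ℂ) (u : G) (s : ℝ), conj a * a = 1 → f u = a * ‖f u‖ → 0 ≤ s →
      8 * (1 - ‖f u‖) ≤ s ^ 2 → ‖S a u‖ ≤ s := by
    intro a u s ha hu hs h
    have := hC a u ha hu
    refine (sq_le_sq₀ (norm_nonneg _) hs).1 ?_
    nlinarith [sq_nonneg ‖C a u‖]
  have bC : ∀ (a : ℂ) (u : G) (s : ℝ), conj a * a = 1 → f u = a * ‖f u‖ → 0 ≤ s →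
      2 - 2 * ‖f u‖ - (1 - ‖f (u + u)‖) / 2 ≤ s ^ 2 → ‖C a u‖ ≤ s := by
    intro a u s ha hu hs h
    have h1 := hC a u ha hu
    have h2 := hS a u ha
    have h3 : (conj a * conj a * f (u + u)).re ≤ ‖f (u + u)‖ := by
      refine (Complex.re_le_norm _).trans ?_
      rw [norm_mul, norm_mul, RCLike.norm_conj, hun a ha]; simp
    refine (sq_le_sq₀ (norm_nonneg _) hs).1 ?_
    linarith
  rw [hIm]
  refine (norm_add_le _ _).trans (add_le_add ?_ ?_)
  · exact (norm_inner_le_norm _ _).trans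
      (mul_le_mul (bC _ _ _ hα hx hcx0 hcx) (bS _ _ _ hβ hy hsy0 hsy) (norm_nonneg _) hcx0)
  · exact (norm_inner_le_norm _ _).trans
      (mul_le_mul (bC _ _ _ hβ hy hcy0 hcy) (bS _ _ _ hα hx hsx0 hsx) (norm_nonneg _) hcy0)

/-! ### Part B: averaging and homogeneity of the modulus -/

lemma avg_le {n : ℕ} (w : Fin n → ℝ) (hw : ∀ j, 0 ≤ w j) (hw1 : ∑ j, w j = 1)
    (m : Fin n → ℕ) (hm : ∀ j, 1 ≤ m j) (b : ℕ → ℝ)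
    (hb : ∀ k, b k ≤ ∑ j, w j * b (k + m j)) (B : ℝ) (K : ℕ) (hK : ∀ l, K ≤ l → b l ≤ B) (k : ℕ) :
    b k ≤ B := by
  have h : ∀ d l, K ≤ l + d → b l ≤ B := by
    intro d
    induction d with
    | zero => intro l hl; exact hK l (by simpa using hl)
    | succ d ih =>
      intro l hl
      refine (hb l).trans ?_
      calc ∑ j, w j * b (l + m j) ≤ ∑ j, w j * B := by
            refine Finset.sum_le_sum fun j _ => mul_le_mul_of_nonneg_left (ih _ ?_) (hw j)
            have := hm j; omega
        _ = B := by rw [← Finset.sum_mul, hw1, one_mul]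
  exact h K k (by omega)

open ComplexConjugate in
lemma unit_phase {z : ℂ} (hz : z ≠ 0) : conj (z / ‖z‖) * (z / ‖z‖) = 1 := by
  rw [← Complex.normSq_eq_conj_mul_self, Complex.normSq_eq_norm_sq]
  simp [hz]

lemma phase_mul {z : ℂ} (hz : z ≠ 0) : z = (z / ‖z‖) * ‖z‖ := by
  have : (‖z‖ : ℂ) ≠ 0 := by simpa using hz
  field_simp

open ComplexConjugate in
lemma phase_conj_mul {z : ℂ} (hz : z ≠ 0) : conj (z / ‖z‖) * z = ‖z‖ := by
  have h := unit_phase hz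
  have h2 := phase_mul hz
  calc conj (z / ‖z‖) * z = conj (z / ‖z‖) * ((z / ‖z‖) * ‖z‖) := by rw [← h2]
    _ = ‖z‖ := by rw [← mul_assoc, h, one_mul]

/-- The common setting. -/
structure Setting {G : Type} [AddCommGroup G] (f : G → ℂ) (p : ℕ) (d : G →+ G) (n : ℕ)
    (m : Fin n → ℕ) (ε : Fin n → ℤ) : Prop where
  pd : IsPositiveDefinite f
  f0 : f 0 = 1
  ne : ∀ x, f x ≠ 0
  p2 : 2 ≤ p
  pd_mul : ∀ x, p • d x = x
  hm : ∀ j, 1 ≤ m j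
  hε : ∀ j, ε j = 1 ∨ ε j = -1
  hw : ∑ j, (1 / (p : ℝ) ^ (2 * m j)) = 1
  heq : ∀ x, f x = ∏ j, f (ε j • d^[m j] x)

namespace Setting

variable {G : Type} [AddCommGroup G] {f : G → ℂ} {p : ℕ} {d : G →+ G} {n : ℕ}
    {m : Fin n → ℕ} {ε : Fin n → ℤ}

lemma norm_neg' (S : Setting f p d n m ε) (x : G) : ‖f (-x)‖ = ‖f x‖ := by
  rw [pd_conj S.pd, RCLike.norm_conj]

lemma norm_pos' (S : Setting f p d n m ε) (x : G) : 0 < ‖f x‖ := norm_pos_iff.2 (S.ne x)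

lemma tri_re (S : Setting f p d n m ε) (x y : G) :
    √(1 - (starRingEnd ℂ (f x / ‖f x‖) * starRingEnd ℂ (f y / ‖f y‖) * f (x + y)).re) ≤
      √(1 - ‖f x‖) + √(1 - ‖f y‖) := by
  have := pd_tri S.pd S.f0 x y _ _ (unit_phase (S.ne x)) (unit_phase (S.ne y))
  rwa [phase_conj_mul (S.ne x), phase_conj_mul (S.ne y), Complex.ofReal_re, Complex.ofReal_re]
    at this

lemma tri (S : Setting f p d n m ε) (x y : G) :
    √(1 - ‖f (x + y)‖) ≤ √(1 - ‖f x‖) + √(1 - ‖f y‖) := by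
  refine le_trans (Real.sqrt_le_sqrt ?_) (S.tri_re x y)
  have h : (starRingEnd ℂ (f x / ‖f x‖) * starRingEnd ℂ (f y / ‖f y‖) * f (x + y)).re
      ≤ ‖f (x + y)‖ := by
    refine (Complex.re_le_norm _).trans ?_
    have hx := (S.norm_pos' x).ne'
    have hy := (S.norm_pos' y).ne'
    simp [hx, hy]
  linarith

lemma norm_le_one (S : Setting f p d n m ε) (x : G) : ‖f x‖ ≤ 1 := by
  obtain ⟨H, i1, i2, e, he⟩ := gns S.pd
  have h0 : ∀ y, ‖e y‖ = 1 := by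
    intro y
    have h := nsq (e y)
    rw [he, sub_self, S.f0] at h
    have h' : ‖e y‖ ^ 2 = 1 := by exact_mod_cast h
    nlinarith [norm_nonneg (e y)]
  have h := norm_inner_le_norm (𝕜 := ℂ) (e 0) (e x)
  rwa [he, h0, h0, sub_zero, mul_one] at h

lemma nsmul_le (S : Setting f p d n m ε) (x : G) (N : ℕ) :
    √(1 - ‖f (N • x)‖) ≤ N * √(1 - ‖f x‖) := by
  induction N with
  | zero => simp [S.f0]
  | succ N ih =>
    rw [succ_nsmul]
    have := S.tri (N • x) x
    push_cast
    linarith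

/-- minus log of the modulus -/
noncomputable def psi (f : G → ℂ) (x : G) : ℝ := - Real.log ‖f x‖

lemma psi_nonneg (S : Setting f p d n m ε) (x : G) : 0 ≤ psi f x :=
  neg_nonneg.2 (Real.log_nonpos (norm_nonneg _) (S.norm_le_one x))

lemma exp_psi (S : Setting f p d n m ε) (x : G) : ‖f x‖ = Real.exp (-psi f x) := by
  rw [psi, neg_neg, Real.exp_log (S.norm_pos' x)]

lemma psi_neg (S : Setting f p d n m ε) (x : G) : psi f (-x) = psi f x := by
  rw [psi, psi, S.norm_neg']

lemma psi_eq (S : Setting f p d n m ε) (x : G) : psi f x = ∑ j, psi f (d^[m j] x) := by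
  have h : ∀ j, psi f (ε j • d^[m j] x) = psi f (d^[m j] x) := by
    intro j
    rcases S.hε j with h | h <;> rw [h]
    · simp
    · simp [S.psi_neg]
  simp_rw [← h]
  simp only [psi]
  rw [S.heq x, norm_prod, Real.log_prod fun j _ => (S.norm_pos' _).ne']
  simp

lemma le_psi (S : Setting f p d n m ε) (x : G) : 1 - ‖f x‖ ≤ psi f x := by
  have := Real.log_le_sub_one_of_pos (S.norm_pos' x)
  rw [psi]; linarith

lemma psi_mul_le (S : Setting f p d n m ε) (x : G) : psi f x * ‖f x‖ ≤ 1 - ‖f x‖ := by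
  have h := Real.log_le_sub_one_of_pos (inv_pos.2 (S.norm_pos' x))
  rw [Real.log_inv] at h
  have h2 := mul_le_mul_of_nonneg_right h (norm_nonneg (f x))
  rw [sub_mul, inv_mul_cancel₀ (S.norm_pos' x).ne', one_mul] at h2
  exact h2

lemma pk (S : Setting f p d n m ε) (k : ℕ) (x : G) : (p ^ k) • d^[k] x = x := by
  induction k generalizing x with
  | zero => simp
  | succ k ih =>
    rw [Function.iterate_succ_apply, pow_succ', mul_smul, ih, S.pd_mul]

lemma pk' (S : Setting f p d n m ε) (k : ℕ) (x : G) : d^[k] ((p ^ k) • x) = x := by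
  have h : ∀ (N k : ℕ) (x : G), d^[k] (N • x) = N • d^[k] x := by
    intro N k
    induction k with
    | zero => intro x; simp
    | succ k ih => intro x; rw [Function.iterate_succ_apply, map_nsmul, ih,
        Function.iterate_succ_apply]
  rw [h, S.pk]

lemma p_pos (S : Setting f p d n m ε) : (0 : ℝ) < p := by
  have := S.p2
  exact_mod_cast (by omega : 0 < p)

lemma b_avg (S : Setting f p d n m ε) (g : ℕ → ℝ) (k : ℕ) :
    (p : ℝ) ^ (2 * k) * ∑ j, g (k + m j) =
      ∑ j, (1 / (p : ℝ) ^ (2 * m j)) * ((p : ℝ) ^ (2 * (k + m j)) * g (k + m j)) := by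
  rw [Finset.mul_sum]
  refine Finset.sum_congr rfl fun j _ => ?_
  have := S.p_pos.ne'
  rw [mul_add, pow_add]
  field_simp

lemma psi_scale_le (S : Setting f p d n m ε) (x : G) (i j : ℕ) :
    (p : ℝ) ^ (2 * i) * psi f (d^[i] x) ≤ (p : ℝ) ^ (2 * j) * psi f (d^[j] x) := by
  set a : ℕ → ℝ := fun k => (p : ℝ) ^ (2 * k) * (1 - ‖f (d^[k] x)‖) with ha
  set b : ℕ → ℝ := fun k => (p : ℝ) ^ (2 * k) * psi f (d^[k] x) with hb
  change b i ≤ b j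
  have hp := S.p_pos
  have w0 : ∀ j, 0 ≤ 1 / (p : ℝ) ^ (2 * m j) := fun j => by positivity
  have bavg : ∀ k, b k = ∑ j, (1 / (p : ℝ) ^ (2 * m j)) * b (k + m j) := by
    intro k
    rw [hb]
    simp only
    rw [S.psi_eq, ← S.b_avg (fun k => psi f (d^[k] x))]
    congr 1
    refine Finset.sum_congr rfl fun j _ => ?_
    rw [add_comm, Function.iterate_add_apply]
  have amono : Monotone a := by
    refine monotone_nat_of_le_succ fun k => ?_
    simp only [ha]
    have h := S.nsmul_le (d^[k+1] x) p
    rw [Function.iterate_succ_apply', S.pd_mul, ← Function.iterate_succ_apply' d] at h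
    have h2 := pow_le_pow_left₀ (Real.sqrt_nonneg _) h 2
    rw [mul_pow, Real.sq_sqrt (by linarith [S.norm_le_one (d^[k] x)]),
      Real.sq_sqrt (by linarith [S.norm_le_one (d^[k+1] x)])] at h2
    rw [mul_add, pow_add, mul_assoc, mul_one]
    exact mul_le_mul_of_nonneg_left h2 (by positivity)
  have ab : ∀ k, a k ≤ b k := fun k =>
    mul_le_mul_of_nonneg_left (S.le_psi _) (by positivity)
  have ab' : ∀ l k, a l ≤ b k := by
    intro l k
    have := avg_le _ w0 S.hw m S.hm (fun k => - b k) (fun k => by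
      simp only [mul_neg, Finset.sum_neg_distrib]; exact (neg_le_neg (bavg k).ge)) (-a l) l
      (fun l' hl' => neg_le_neg ((amono hl').trans (ab l'))) k
    linarith
  have bM : ∀ k, b k * ‖f (d^[k] x)‖ ≤ b j := by
    intro k
    refine le_trans ?_ (ab' k j)
    simp only [hb, ha]
    rw [mul_assoc]
    exact mul_le_mul_of_nonneg_left (S.psi_mul_le _) (by positivity)
  have b0 : ∀ k, 0 ≤ b k := fun k => mul_nonneg (by positivity) (S.psi_nonneg _)
  refine le_of_forall_pos_le_add fun η hη => ?_
  -- find δ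
  have hlim : Filter.Tendsto (fun k : ℕ => b j * (1 / (p : ℝ) ^ (2 * k))) Filter.atTop (nhds 0) := by
    have : Filter.Tendsto (fun k : ℕ => (1 / (p : ℝ) ^ 2) ^ k) Filter.atTop (nhds 0) := by
      apply tendsto_pow_atTop_nhds_zero_of_lt_one (by positivity)
      rw [div_lt_one (by positivity)]
      have : (2 : ℝ) ≤ p := by exact_mod_cast S.p2
      nlinarith
    have h := this.const_mul (b j)
    rw [mul_zero] at h
    refine h.congr fun k => ?_
    rw [div_pow, one_pow, pow_mul]
  have hδ : 0 < η / (b j + η) := by have := b0 j; positivity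
  obtain ⟨K, hK⟩ := Filter.eventually_atTop.1 (hlim.eventually (gt_mem_nhds hδ))
  refine avg_le _ w0 S.hw m S.hm b (fun k => (bavg k).le) _ K (fun l hl => ?_) i
  have h1 := hK l hl
  have h2 : 1 - ‖f (d^[l] x)‖ ≤ b j * (1 / (p : ℝ) ^ (2 * l)) := by
    have := ab' l j
    simp only [ha] at this
    rw [mul_one_div, le_div_iff₀ (by positivity)]
    linarith
  have h3 : 1 - η / (b j + η) ≤ ‖f (d^[l] x)‖ := by linarith
  have hpos : 0 < b j + η := by have := b0 j; positivity
  have h4 : b j / (b j + η) ≤ ‖f (d^[l] x)‖ := by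
    refine le_trans (le_of_eq ?_) h3
    field_simp; ring
  have h5 := (mul_le_mul_of_nonneg_left h4 (b0 l)).trans (bM l)
  rcases (b0 j).eq_or_lt with h0 | h0
  · -- b j = 0
    rw [← h0] at h2
    have : ‖f (d^[l] x)‖ = 1 := le_antisymm (S.norm_le_one _) (by linarith)
    have h6 := bM l
    rw [this] at h6; linarith
  · rw [mul_div_assoc', div_le_iff₀ hpos] at h5
    have : b j * b l ≤ b j * (b j + η) := by linarith
    exact le_of_mul_le_mul_left this h0

lemma psi_scale (S : Setting f p d n m ε) (x : G) (k : ℕ) :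
    (p : ℝ) ^ (2 * k) * psi f (d^[k] x) = psi f x := by
  have h1 := S.psi_scale_le x k 0
  have h2 := S.psi_scale_le x 0 k
  simp at h1 h2
  exact le_antisymm h1 h2

lemma psi_iter (S : Setting f p d n m ε) (x : G) (k : ℕ) :
    psi f (d^[k] x) = psi f x * (1 / (p : ℝ) ^ k) ^ 2 := by
  rw [← S.psi_scale x k]
  have := S.p_pos.ne'
  rw [pow_mul']
  field_simp

lemma tendsto_inv (S : Setting f p d n m ε) :
    Filter.Tendsto (fun k : ℕ => 1 / (p : ℝ) ^ k) Filter.atTop (nhds 0) := by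
  have hp := S.p_pos
  have : Filter.Tendsto (fun k : ℕ => (1 / (p : ℝ)) ^ k) Filter.atTop (nhds 0) := by
    apply tendsto_pow_atTop_nhds_zero_of_lt_one (by positivity)
    rw [div_lt_one (by positivity)]
    have : (2 : ℝ) ≤ p := by exact_mod_cast S.p2
    linarith
  refine this.congr fun k => ?_
  rw [div_pow, one_pow]

lemma tendsto_rho (S : Setting f p d n m ε) (x : G) :
    Filter.Tendsto (fun k : ℕ => (p : ℝ) ^ k * √(1 - ‖f (d^[k] x)‖)) Filter.atTop
      (nhds √(psi f x)) := by
  have hp := S.p_pos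
  have e : ∀ k, (p : ℝ) ^ k * √(1 - ‖f (d^[k] x)‖) =
      √((p : ℝ) ^ (2 * k) * (1 - ‖f (d^[k] x)‖)) := by
    intro k
    rw [Real.sqrt_mul (by positivity), pow_mul', Real.sqrt_sq (by positivity)]
  simp_rw [e]
  apply Filter.Tendsto.sqrt
  have hM : Filter.Tendsto (fun k : ℕ => psi f x * ‖f (d^[k] x)‖) Filter.atTop
      (nhds (psi f x)) := by
    have h1 : Filter.Tendsto (fun k : ℕ => ‖f (d^[k] x)‖) Filter.atTop (nhds 1) := by
      have : ∀ k, ‖f (d^[k] x)‖ = Real.exp (-(psi f x * (1 / (p : ℝ) ^ k) ^ 2)) := by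
        intro k; rw [S.exp_psi, S.psi_iter]
      simp_rw [this]
      have h := ((S.tendsto_inv.pow 2).const_mul (psi f x)).neg
      simp only [ne_eq, OfNat.ofNat_ne_zero, not_false_eq_true, zero_pow, mul_zero, neg_zero] at h
      have := (Real.continuous_exp.tendsto 0).comp h
      rw [Real.exp_zero] at this
      exact this
    simpa using h1.const_mul (psi f x)
  refine tendsto_of_tendsto_of_tendsto_of_le_of_le hM tendsto_const_nhds ?_ ?_
  · intro k
    change psi f x * ‖f (d^[k] x)‖ ≤ _
    rw [← S.psi_scale x k, mul_assoc]
    exact mul_le_mul_of_nonneg_left (S.psi_mul_le _) (by positivity)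
  · intro k
    change _ ≤ psi f x
    rw [← S.psi_scale x k]
    exact mul_le_mul_of_nonneg_left (S.le_psi _) (by positivity)

lemma h_tri (S : Setting f p d n m ε) (x y : G) :
    √(psi f (x + y)) ≤ √(psi f x) + √(psi f y) := by
  have hp := S.p_pos
  refine le_of_tendsto_of_tendsto' (S.tendsto_rho (x + y))
    ((S.tendsto_rho x).add (S.tendsto_rho y)) fun k => ?_
  rw [iterate_map_add, ← mul_add]
  exact mul_le_mul_of_nonneg_left (S.tri _ _) (by positivity)

lemma h_nsmul_le (S : Setting f p d n m ε) (x : G) (N : ℕ) :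
    √(psi f (N • x)) ≤ N * √(psi f x) := by
  induction N with
  | zero => simp [psi, S.f0]
  | succ N ih =>
    rw [succ_nsmul]
    have := S.h_tri (N • x) x
    push_cast
    linarith

lemma h_nsmul (S : Setting f p d n m ε) (x : G) (N : ℕ) :
    √(psi f (N • x)) = N * √(psi f x) := by
  refine le_antisymm (S.h_nsmul_le x N) ?_
  have hp := S.p_pos
  have hN : N ≤ p ^ N := (Nat.lt_pow_self S.p2).le
  have h1 : √(psi f ((p ^ N) • x)) = (p : ℝ) ^ N * √(psi f x) := by
    have := S.psi_scale ((p ^ N) • x) N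
    rw [S.pk'] at this
    rw [← this, Real.sqrt_mul (by positivity), pow_mul', Real.sqrt_sq (by positivity)]
  have h2 := S.h_tri (N • x) ((p ^ N - N) • x)
  rw [← add_nsmul, Nat.add_sub_cancel' hN, h1] at h2
  have h3 := S.h_nsmul_le x (p ^ N - N)
  rw [Nat.cast_sub hN] at h3
  push_cast at h3
  linarith

lemma psi_nsmul (S : Setting f p d n m ε) (x : G) (N : ℕ) :
    psi f (N • x) = N ^ 2 * psi f x := by
  have := congrArg (· ^ 2) (S.h_nsmul x N)
  simpa [mul_pow, Real.sq_sqrt (S.psi_nonneg _)] using this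

lemma psi_zsmul (S : Setting f p d n m ε) (x : G) (N : ℤ) :
    psi f (N • x) = (N : ℝ) ^ 2 * psi f x := by
  obtain ⟨k, rfl | rfl⟩ := N.eq_nat_or_neg
  · simp [S.psi_nsmul]
  · simp [S.psi_nsmul, S.psi_neg]

end Setting

/-! ### Part C: the phase is a character -/

lemma norm_prod_sub_one_le {ι : Type*} (s : Finset ι) (z : ι → ℂ) (hz : ∀ i, ‖z i‖ = 1) :
    ‖∏ i ∈ s, z i - 1‖ ≤ ∑ i ∈ s, ‖z i - 1‖ := by
  classical
  induction s using Finset.induction_on with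
  | empty => simp
  | insert a s ha ih =>
    rw [Finset.prod_insert ha, Finset.sum_insert ha]
    have : z a * ∏ i ∈ s, z i - 1 = (z a - 1) + z a * (∏ i ∈ s, z i - 1) := by ring
    rw [this]
    refine (norm_add_le _ _).trans ?_
    rw [norm_mul, hz a, one_mul]
    linarith

open ComplexConjugate in
lemma unit_sub_one_le (D : ℂ) (hD : ‖D‖ = 1) (M : ℝ) (hM0 : 0 ≤ M) (hM : M ≤ 1)
    (hre : 1 / 2 ≤ (M * conj D).re) : ‖D - 1‖ ≤ 3 * |(M * conj D).im| := by
  have h1 : (M * conj D).re = M * D.re := by simp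
  have h2 : |(M * conj D).im| = M * |D.im| := by simp [abs_mul, abs_of_nonneg hM0]
  rw [h1] at hre
  rw [h2]
  have hn : D.re ^ 2 + D.im ^ 2 = 1 := by
    have := Complex.sq_norm D
    rw [hD, Complex.normSq_apply] at this
    nlinarith
  have hre1 : D.re ≤ 1 := by nlinarith [sq_nonneg D.im]
  have hre0 : 0 ≤ D.re := by
    by_contra h
    push Not at h
    nlinarith
  have hMh : 1 / 2 ≤ M := by nlinarith
  have hs : ‖D - 1‖ ^ 2 = 2 - 2 * D.re := by
    rw [Complex.sq_norm, Complex.normSq_apply]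
    simp
    nlinarith
  refine (sq_le_sq₀ (norm_nonneg _) (by positivity)).1 ?_
  rw [hs, mul_pow, mul_pow, sq_abs]
  have : 1 / 4 ≤ M ^ 2 := by nlinarith
  have h3 : 1 / 4 * D.im ^ 2 ≤ M ^ 2 * D.im ^ 2 := mul_le_mul_of_nonneg_right this (sq_nonneg _)
  nlinarith

lemma exp_aux (t : ℝ) (ht : 0 ≤ t) :
    2 - 2 * Real.exp (-t) - (1 - Real.exp (-(4 * t))) / 2 ≤ (2 * t) ^ 2 := by
  have h1 := Real.add_one_le_exp (-t)
  have h2 : Real.exp (-(4 * t)) ≤ 1 - 4 * t + (4 * t) ^ 2 / 2 := by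
    have h := Real.quadratic_le_exp_of_nonneg (x := 4 * t) (by linarith)
    have hq : 0 < 1 + 4 * t + (4 * t) ^ 2 / 2 := by positivity
    rw [Real.exp_neg]
    refine (inv_anti₀ hq h).trans ?_
    rw [inv_le_iff_one_le_mul₀ hq]
    nlinarith [sq_nonneg (t ^ 2)]
  nlinarith

namespace Setting

variable {G : Type} [AddCommGroup G] {f : G → ℂ} {p : ℕ} {d : G →+ G} {n : ℕ}
    {m : Fin n → ℕ} {ε : Fin n → ℤ}

/-- phase of `f` -/
noncomputable def ph (f : G → ℂ) (x : G) : ℂ := f x / ‖f x‖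

/-- multiplicativity defect of the phase -/
noncomputable def df (f : G → ℂ) (x y : G) : ℂ :=
  ph f x * ph f y * starRingEnd ℂ (ph f (x + y))

lemma norm_ph (S : Setting f p d n m ε) (x : G) : ‖ph f x‖ = 1 := by
  have := (S.norm_pos' x).ne'
  simp [ph, this]

lemma norm_df (S : Setting f p d n m ε) (x y : G) : ‖df f x y‖ = 1 := by
  simp [df, S.norm_ph]

lemma ph_neg (S : Setting f p d n m ε) (x : G) : ph f (-x) = starRingEnd ℂ (ph f x) := by
  simp [ph, pd_conj S.pd]

lemma df_neg (S : Setting f p d n m ε) (x y : G) :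
    df f (-x) (-y) = starRingEnd ℂ (df f x y) := by
  rw [df, df, ← neg_add, S.ph_neg, S.ph_neg, S.ph_neg]; simp

lemma ph_eq (S : Setting f p d n m ε) (x : G) : ph f x = ∏ j, ph f (ε j • d^[m j] x) := by
  simp only [ph]
  rw [Finset.prod_div_distrib, ← S.heq]
  congr 1
  conv_lhs => rw [S.heq x, norm_prod]
  push_cast; rfl

lemma df_eq (S : Setting f p d n m ε) (x y : G) :
    df f x y = ∏ j, df f (ε j • d^[m j] x) (ε j • d^[m j] y) := by
  simp only [df]
  rw [Finset.prod_mul_distrib, Finset.prod_mul_distrib, ← S.ph_eq, ← S.ph_eq, S.ph_eq (x + y),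
    map_prod]
  simp only [iterate_map_add, smul_add]

lemma df_le (S : Setting f p d n m ε) (x y : G) :
    ‖df f x y - 1‖ ≤ ∑ j, ‖df f (d^[m j] x) (d^[m j] y) - 1‖ := by
  rw [S.df_eq]
  refine (norm_prod_sub_one_le _ _ fun j => S.norm_df _ _).trans (le_of_eq ?_)
  refine Finset.sum_congr rfl fun j _ => ?_
  rcases S.hε j with h | h <;> rw [h]
  · simp
  · simp only [neg_smul, one_smul, S.df_neg]
    rw [← RCLike.norm_conj]
    simp

lemma df_small (S : Setting f p d n m ε) (x y : G)
    (h : (√(psi f x) + √(psi f y)) ^ 2 ≤ 1 / 2) :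
    ‖df f x y - 1‖ ≤
      3 * (psi f x * √(8 * psi f y) + psi f y * √(8 * psi f x)) := by
  have hc : ∀ z, 2 - 2 * ‖f z‖ - (1 - ‖f (z + z)‖) / 2 ≤ (2 * psi f z) ^ 2 := by
    intro z
    have h2 := S.psi_nsmul z 2
    rw [two_nsmul] at h2
    rw [S.exp_psi z, S.exp_psi (z + z), h2]
    have := exp_aux (psi f z) (S.psi_nonneg z)
    norm_num at this ⊢
    linarith
  have hs : ∀ z, 8 * (1 - ‖f z‖) ≤ √(8 * psi f z) ^ 2 := by
    intro z
    have := S.psi_nonneg z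
    rw [Real.sq_sqrt (by linarith)]
    linarith [S.le_psi z]
  have x0 := S.psi_nonneg x
  have y0 := S.psi_nonneg y
  have him := pd_im S.pd S.f0 x y (ph f x) (ph f y) (unit_phase (S.ne x)) (unit_phase (S.ne y))
    (phase_mul (S.ne x)) (phase_mul (S.ne y)) (2 * psi f x) √(8 * psi f x) (2 * psi f y)
    √(8 * psi f y) (by positivity) (by positivity) (by positivity) (by positivity)
    (hc x) (hs x) (hc y) (hs y)
  have hz : starRingEnd ℂ (ph f x) * starRingEnd ℂ (ph f y) * f (x + y) =
      (‖f (x + y)‖ : ℂ) * starRingEnd ℂ (df f x y) := by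
    conv_lhs => rw [phase_mul (S.ne (x + y))]
    simp only [df, map_mul, Complex.conj_conj]
    rw [ph]; simp only [ph]; ring
  have hre := S.tri_re x y
  change √(1 - (starRingEnd ℂ (ph f x) * starRingEnd ℂ (ph f y) * f (x + y)).re) ≤ _ at hre
  rw [hz] at hre him
  have hre2 : 1 - ((‖f (x + y)‖ : ℂ) * starRingEnd ℂ (df f x y)).re ≤ 1 / 2 := by
    refine le_trans ?_ h
    refine (Real.sqrt_le_left (by positivity)).1 (hre.trans (add_le_add ?_ ?_))
    · exact Real.sqrt_le_sqrt (S.le_psi x)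
    · exact Real.sqrt_le_sqrt (S.le_psi y)
  have := unit_sub_one_le _ (S.norm_df x y) _ (norm_nonneg _) (S.norm_le_one (x + y))
    (by linarith)
  linarith

lemma df_one (S : Setting f p d n m ε) (x y : G) : df f x y = 1 := by
  have hp := S.p_pos
  set b : ℕ → ℝ := fun k => (p : ℝ) ^ (2 * k) * ‖df f (d^[k] x) (d^[k] y) - 1‖ with hb
  have w0 : ∀ j, 0 ≤ 1 / (p : ℝ) ^ (2 * m j) := fun j => by positivity
  have bavg : ∀ k, b k ≤ ∑ j, (1 / (p : ℝ) ^ (2 * m j)) * b (k + m j) := by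
    intro k
    simp only [hb]
    rw [← S.b_avg (fun k => ‖df f (d^[k] x) (d^[k] y) - 1‖)]
    refine mul_le_mul_of_nonneg_left ((S.df_le _ _).trans (le_of_eq ?_)) (by positivity)
    refine Finset.sum_congr rfl fun j _ => ?_
    rw [add_comm, Function.iterate_add_apply, Function.iterate_add_apply]
  set A := 3 * (psi f x * √(8 * psi f y) + psi f y * √(8 * psi f x)) with hA
  have l1 : Filter.Tendsto (fun k : ℕ => (√(psi f x) + √(psi f y)) ^ 2 * (1 / (p : ℝ) ^ k) ^ 2)
      Filter.atTop (nhds 0) := by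
    simpa using (S.tendsto_inv.pow 2).const_mul ((√(psi f x) + √(psi f y)) ^ 2)
  have l2 : Filter.Tendsto (fun k : ℕ => A * (1 / (p : ℝ) ^ k)) Filter.atTop (nhds 0) := by
    simpa using S.tendsto_inv.const_mul A
  have hb0 : b 0 ≤ 0 := by
    refine le_of_forall_pos_le_add fun η hη => ?_
    rw [zero_add]
    obtain ⟨K, hK⟩ := Filter.eventually_atTop.1
      ((l1.eventually (gt_mem_nhds (show (0 : ℝ) < 1 / 2 by norm_num))).and
        (l2.eventually (gt_mem_nhds hη)))
    refine avg_le _ w0 S.hw m S.hm b bavg _ K (fun l hl => ?_) 0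
    obtain ⟨h1, h2⟩ := hK l hl
    have hq : 0 ≤ 1 / (p : ℝ) ^ l := by positivity
    have s1 : ∀ z, √(psi f (d^[l] z)) = √(psi f z) * (1 / (p : ℝ) ^ l) := by
      intro z
      rw [S.psi_iter, Real.sqrt_mul (S.psi_nonneg z), Real.sqrt_sq hq]
    have s2 : ∀ z, √(8 * psi f (d^[l] z)) = √(8 * psi f z) * (1 / (p : ℝ) ^ l) := by
      intro z
      rw [Real.sqrt_mul (by norm_num), s1, Real.sqrt_mul (by norm_num), mul_assoc]
    have h3 := S.df_small (d^[l] x) (d^[l] y) (by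
      rw [s1, s1, ← add_mul, mul_pow]; exact h1.le)
    rw [s2, s2, S.psi_iter, S.psi_iter] at h3
    have h4 : b l ≤ A * (1 / (p : ℝ) ^ l) := by
      simp only [hb]
      refine (mul_le_mul_of_nonneg_left h3 (by positivity)).trans (le_of_eq ?_)
      rw [hA, pow_mul']
      field_simp
    linarith
  have : ‖df f x y - 1‖ ≤ 0 := by simpa [hb] using hb0
  exact sub_eq_zero.1 (norm_le_zero_iff.1 this)

lemma ph_add (S : Setting f p d n m ε) (x y : G) : ph f (x + y) = ph f x * ph f y := by
  have h := S.df_one x y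
  rw [df] at h
  have h2 := unit_phase (S.ne (x + y))
  change starRingEnd ℂ (ph f (x + y)) * ph f (x + y) = 1 at h2
  linear_combination (-ph f (x + y)) * h + ph f x * ph f y * h2

end Setting


/-! ### Part D: arithmetic of `Y` and conclusion -/

lemma div_of_coprime (Y : AddSubgroup ℚ) (q : ℕ) (a b : ℤ) (hqa : (q : ℤ) ∣ a)
    (hqb : IsCoprime (q : ℤ) b) (h : ∀ y ∈ Y, ∃ y' ∈ Y, (b : ℚ) * y = a * y') :
    ratSMul (q : ℚ) Y = (Y : Set ℚ) := by
  ext y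
  constructor
  · rintro ⟨z, hz, rfl⟩
    have := Y.nsmul_mem hz q
    simpa using this
  · intro hy
    obtain ⟨y', hy', e⟩ := h y hy
    obtain ⟨c, rfl⟩ := hqa
    obtain ⟨s, t, hst⟩ := hqb
    refine ⟨s • y + (t * c) • y', Y.add_mem (Y.zsmul_mem hy _) (Y.zsmul_mem hy' _), ?_⟩
    have hst' : (s : ℚ) * q + t * b = 1 := by exact_mod_cast hst
    simp only [zsmul_eq_mul]
    push_cast at e ⊢
    linear_combination y * hst' - t * e

lemma rat_shape (p : ℕ) (hp : p.Prime) (Y : AddSubgroup ℚ)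
    (hqY : ∀ q : ℕ, q.Prime → q ≠ p → ratSMul (q : ℚ) Y ≠ (Y : Set ℚ))
    (r : ℚ) (hr0 : r ≠ 0) (hrY : ratSMul r Y = (Y : Set ℚ)) (hr1 : r ^ 2 < 1) :
    ∃ (k : ℕ) (e : ℤ), 1 ≤ k ∧ (e = 1 ∨ e = -1) ∧ r = e / (p : ℚ) ^ k := by
  have hden : (r.den : ℚ) ≠ 0 := by exact_mod_cast r.den_nz
  have hnd : r * r.den = r.num := Rat.mul_den_eq_num r
  have hcop : IsCoprime r.num (r.den : ℤ) := by
    rw [Int.isCoprime_iff_nat_coprime]; simpa using r.reduced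
  have h1 : ∀ {q : ℕ}, q.Prime → q ∣ r.num.natAbs → q = p := by
    intro q hq hd
    by_contra hne
    have hd' : (q : ℤ) ∣ r.num := Int.natCast_dvd.2 hd
    refine hqY q hq hne (div_of_coprime Y q r.num r.den hd' (hcop.of_isCoprime_of_dvd_left hd') ?_)
    intro y hy
    have : y ∈ ratSMul r Y := by rw [hrY]; exact hy
    obtain ⟨y', hy', rfl⟩ := this
    refine ⟨y', hy', ?_⟩
    simp only [Int.cast_natCast]
    linear_combination y' * hnd
  have h2 : ∀ {q : ℕ}, q.Prime → q ∣ r.den → q = p := by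
    intro q hq hd
    by_contra hne
    have hd' : (q : ℤ) ∣ (r.den : ℤ) := by exact_mod_cast hd
    refine hqY q hq hne (div_of_coprime Y q r.den r.num hd'
      (hcop.symm.of_isCoprime_of_dvd_left hd') ?_)
    intro y hy
    have : r * y ∈ ratSMul r Y := ⟨y, hy, rfl⟩
    rw [hrY] at this
    refine ⟨r * y, this, ?_⟩
    simp only [Int.cast_natCast]
    linear_combination -y * hnd
  have hn0 : r.num.natAbs ≠ 0 := by simpa using hr0
  have e1 := Nat.eq_prime_pow_of_unique_prime_dvd hn0 h1
  have e2 := Nat.eq_prime_pow_of_unique_prime_dvd r.den_nz h2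
  set i := r.num.natAbs.primeFactorsList.length
  set j := r.den.primeFactorsList.length
  have hpp : (0 : ℚ) < p := by exact_mod_cast hp.pos
  have hp1 : (1 : ℚ) ≤ p := by exact_mod_cast hp.one_lt.le
  have e2' : (r.den : ℚ) = (p : ℚ) ^ j := by exact_mod_cast e2
  have hij : i < j := by
    by_contra hle
    push Not at hle
    have hle' : r.den ≤ r.num.natAbs := by
      rw [e1, e2]; exact Nat.pow_le_pow_right hp.pos hle
    have : (r.den : ℚ) ^ 2 ≤ (r.num : ℚ) ^ 2 := by
      have h : (r.den : ℤ) ^ 2 ≤ r.num ^ 2 := by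
        rw [← Int.natAbs_sq r.num]
        exact_mod_cast Nat.pow_le_pow_left hle' 2
      exact_mod_cast h
    rw [← hnd, mul_pow] at this
    have hd2 : (0 : ℚ) < (r.den : ℚ) ^ 2 := by positivity
    nlinarith
  have key : ∀ e : ℤ, r.num = e * (p : ℤ) ^ i → r = e / (p : ℚ) ^ (j - i) := by
    intro e he
    have he' : (r.num : ℚ) = e * (p : ℚ) ^ i := by exact_mod_cast he
    rw [eq_div_iff (by positivity)]
    have hpi : (p : ℚ) ^ i ≠ 0 := by positivity
    apply mul_right_cancel₀ hpi
    rw [mul_assoc, ← pow_add, Nat.sub_add_cancel hij.le, ← e2', hnd, he']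
  rcases Int.natAbs_eq r.num with h | h
  · refine ⟨j - i, 1, by omega, Or.inl rfl, key 1 ?_⟩
    rw [h, e1]; push_cast; ring
  · refine ⟨j - i, -1, by omega, Or.inr rfl, key (-1) ?_⟩
    rw [h, e1]; push_cast; ring

/-- Dual formulation of the Corollary to the main theorem: a nonvanishing positive definite
solution of `f(y) = ∏ⱼ f(rⱼ y)` on the character group of a solenoid satisfying
condition (i) is Gaussian. -/
theorem generalized_polya_solenoid_nonvanishing
    (p : ℕ) (hp : p.Prime) (Y : AddSubgroup ℚ) (hY : Y ≠ ⊥)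
    (hpY : ratSMul (p : ℚ) Y = (Y : Set ℚ))
    (hqY : ∀ q : ℕ, q.Prime → q ≠ p → ratSMul (q : ℚ) Y ≠ (Y : Set ℚ))
    (n : ℕ) (hn : 2 ≤ n) (r : Fin n → ℚ) (hr0 : ∀ j, r j ≠ 0)
    (hrY : ∀ j, ratSMul (r j) Y = (Y : Set ℚ))
    (hsum : ∑ j, (r j) ^ 2 = 1)
    (f : Y → ℂ) (hpd : IsPositiveDefinite f) (hf0 : f 0 = 1)
    (hmem : ∀ (j : Fin n) (y : Y), r j * (y : ℚ) ∈ Y)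
    (heq : ∀ y : Y, f y = ∏ j, f ⟨r j * (y : ℚ), hmem j y⟩)
    (hne : ∀ y : Y, f y ≠ 0) :
    ∃ (σ : ℝ), 0 ≤ σ ∧
      ∃ (χ : AddChar Y Circle),
        ∀ y : Y, f y = (χ y : ℂ) * Complex.exp (-(σ : ℂ) * ((y : ℚ) : ℂ) ^ 2) := by
  have hp0 : (p : ℚ) ≠ 0 := by exact_mod_cast hp.ne_zero
  -- each coefficient is plus or minus a negative power of `p`
  have hlt : ∀ j, r j ^ 2 < 1 := by
    intro j
    have : Nontrivial (Fin n) := Fin.nontrivial_iff_two_le.2 hn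
    obtain ⟨i, hi⟩ := exists_ne j
    rw [← hsum]
    refine Finset.single_lt_sum (f := fun j => r j ^ 2) (i := j) (j := i) hi (Finset.mem_univ _) (Finset.mem_univ _) ?_ ?_
    · have := hr0 i; positivity
    · intro k _ _; positivity
  choose m ε hm hε hr using fun j => rat_shape p hp Y hqY (r j) (hr0 j) (hrY j) (hlt j)
  -- division by `p`
  have hdiv : ∀ y : Y, (y : ℚ) / p ∈ Y := by
    intro y
    have : (y : ℚ) ∈ ratSMul (p : ℚ) Y := by rw [hpY]; exact y.2
    obtain ⟨z, hz, e⟩ := this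
    simp only at e
    rw [← e, mul_div_cancel_left₀ _ hp0]; exact hz
  let d : Y →+ Y := AddMonoidHom.mk' (fun y => ⟨(y : ℚ) / p, hdiv y⟩) (by
    intro a b
    apply Subtype.ext
    simp [add_div])
  have hd : ∀ (k : ℕ) (y : Y), ((d^[k] y : Y) : ℚ) = (y : ℚ) / (p : ℚ) ^ k := by
    intro k
    induction k with
    | zero => intro y; simp
    | succ k ih =>
      intro y
      rw [Function.iterate_succ_apply, ih]
      change (y : ℚ) / p / (p : ℚ) ^ k = _
      rw [div_div, pow_succ']
  have S : Setting f p d n m ε :=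
    { pd := hpd
      f0 := hf0
      ne := hne
      p2 := hp.two_le
      pd_mul := by
        intro x
        apply Subtype.ext
        rw [AddSubgroup.coe_nsmul, nsmul_eq_mul]
        change (p : ℚ) * ((x : ℚ) / p) = x
        field_simp
      hm := hm
      hε := hε
      hw := by
        have : ∀ j, (r j) ^ 2 = 1 / (p : ℚ) ^ (2 * m j) := by
          intro j
          rw [hr j, div_pow, ← pow_mul, mul_comm (m j)]
          rcases hε j with h | h <;> rw [h] <;> norm_num
        simp_rw [this] at hsum
        have h2 := congrArg (fun q : ℚ => (q : ℝ)) hsum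
        simpa using h2
      heq := by
        intro x
        rw [heq x]
        refine Finset.prod_congr rfl fun j _ => ?_
        congr 1
        apply Subtype.ext
        rw [AddSubgroup.coe_zsmul, hd, zsmul_eq_mul]
        simp only
        rw [hr j]; ring }
  -- a nonzero element
  obtain ⟨y0, hy0, hne0⟩ := (AddSubgroup.ne_bot_iff_exists_ne_zero.1 hY : ∃ a : Y, a ≠ 0) |>.elim
    (fun a ha => (⟨a, a.2, fun h => ha (Subtype.ext h)⟩ : ∃ y0, y0 ∈ Y ∧ y0 ≠ (0 : ℚ)))
  let z : Y := ⟨y0, hy0⟩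
  have hy0R : ((y0 : ℚ) : ℝ) ≠ 0 := by exact_mod_cast hne0
  have hquad : ∀ y : Y, Setting.psi f y = Setting.psi f z / (y0 : ℝ) ^ 2 * ((y : ℚ) : ℝ) ^ 2 := by
    intro y
    set t : ℚ := (y : ℚ) / y0 with ht
    have hyt : (y : ℚ) = t * y0 := by rw [ht]; field_simp
    have h1 : t.den • y = t.num • z := by
      apply Subtype.ext
      rw [AddSubgroup.coe_nsmul, AddSubgroup.coe_zsmul, nsmul_eq_mul, zsmul_eq_mul, hyt,
        ← Rat.mul_den_eq_num t]
      change _ = t * t.den * y0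
      ring
    have h2 := congrArg (Setting.psi f) h1
    rw [S.psi_nsmul, S.psi_zsmul] at h2
    have hden : (t.den : ℝ) ≠ 0 := by exact_mod_cast t.den_nz
    have hnum : (t.num : ℝ) = (t : ℝ) * t.den := by exact_mod_cast (Rat.mul_den_eq_num t).symm
    have hyR : ((y : ℚ) : ℝ) = (t : ℝ) * (y0 : ℝ) := by exact_mod_cast hyt
    rw [hnum] at h2
    rw [hyR]
    field_simp
    have hd2 : (t.den : ℝ) ^ 2 ≠ 0 := by positivity
    apply mul_left_cancel₀ hd2
    linear_combination h2
  refine ⟨Setting.psi f z / (y0 : ℝ) ^ 2, div_nonneg (S.psi_nonneg z) (by positivity), ?_⟩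
  refine ⟨{ toFun := fun y => ⟨Setting.ph f y, mem_sphere_zero_iff_norm.2 (S.norm_ph y)⟩
            map_zero_eq_one' := by
              apply Subtype.ext
              simp [Setting.ph, hf0]
            map_add_eq_mul' := by
              intro a b
              apply Subtype.ext
              exact S.ph_add a b }, ?_⟩
  intro y
  change f y = Setting.ph f y * _
  have h1 : f y = Setting.ph f y * ‖f y‖ := phase_mul (hne y)
  have h2 : ((‖f y‖ : ℝ) : ℂ) = Complex.exp (-((Setting.psi f z / (y0 : ℝ) ^ 2 : ℝ) : ℂ) *
      (((y : ℚ)) : ℂ) ^ 2) := by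
    rw [S.exp_psi y, hquad y]
    push_cast
    rw [neg_mul]
  rw [← h2]; exact h1
end

section
/- Let ξ_1, …, ξ_n (n ≥ 2) be independent identically distributed real-valued random variables with common distribution μ, and let α_1, …, α_n be nonzero real numbers such that α_1² + ⋯ + α_n² = 1. If ξ_1 and α_1ξ_1 + ⋯ + α_nξ_n are identically distributed, then μ is a Gaussian distribution on ℝ, i.e., there exist m ∈ ℝ and v ≥ 0 such that μ is the (possibly degenerate) normal distribution with mean m and variance v. -/
open MeasureTheory ProbabilityTheory
open scoped BigOperators NNReal

open Filter Topology in
lemma polya_descent {n : ℕ} (α : Fin n → ℝ) (b : ℝ) (hb0 : 0 ≤ b) (hb : b < 1)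
    (hαb : ∀ j, |α j| ≤ b) (hα0 : ∀ j, α j ≠ 0) (P : ℝ → Prop)
    (h : ∀ t, t ≠ 0 → P t → ∃ j, P (α j * t)) (t₀ : ℝ) (h0 : t₀ ≠ 0) (hP : P t₀) :
    ∃ u : ℕ → ℝ, (∀ k, u k ≠ 0) ∧ (∀ k, P (u k)) ∧ Tendsto u atTop (𝓝 0) := by
  classical
  have h' : ∀ s : {t : ℝ // t ≠ 0 ∧ P t}, ∃ s' : {t : ℝ // t ≠ 0 ∧ P t},
      |s'.1| ≤ b * |s.1| := by
    rintro ⟨t, ht, hPt⟩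
    obtain ⟨j, hj⟩ := h t ht hPt
    refine ⟨⟨α j * t, mul_ne_zero (hα0 j) ht, hj⟩, ?_⟩
    simp only [abs_mul]
    exact mul_le_mul_of_nonneg_right (hαb j) (abs_nonneg t)
  choose F hF using h'
  let u : ℕ → {t : ℝ // t ≠ 0 ∧ P t} := fun k => F^[k] ⟨t₀, h0, hP⟩
  have hu : ∀ k, |(u k).1| ≤ b ^ k * |t₀| := by
    intro k
    induction k with
    | zero => simp [u]
    | succ k ih =>
      have h1 : u (k + 1) = F (u k) := by simp only [u, Function.iterate_succ_apply']
      rw [h1]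
      calc _ ≤ b * |(u k).1| := hF _
        _ ≤ b * (b ^ k * |t₀|) := by gcongr
        _ = _ := by ring
  refine ⟨fun k => (u k).1, fun k => (u k).2.1, fun k => (u k).2.2, ?_⟩
  refine squeeze_zero_norm (a := fun k => b ^ k * |t₀|) hu ?_
  simpa using (tendsto_pow_atTop_nhds_zero_of_lt_one hb0 hb).mul_const |t₀|

lemma polya_norm_prod_sub {ι : Type*} (s : Finset ι) (f g : ι → ℂ) (hf : ∀ i, ‖f i‖ ≤ 1)
    (hg : ∀ i, ‖g i‖ ≤ 1) :
    ‖∏ i ∈ s, f i - ∏ i ∈ s, g i‖ ≤ ∑ i ∈ s, ‖f i - g i‖ := by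
  classical
  induction s using Finset.induction_on with
  | empty => simp
  | insert a s ha ih =>
    rw [Finset.prod_insert ha, Finset.prod_insert ha, Finset.sum_insert ha]
    have h1 : f a * ∏ i ∈ s, f i - g a * ∏ i ∈ s, g i =
      (f a - g a) * ∏ i ∈ s, f i + g a * (∏ i ∈ s, f i - ∏ i ∈ s, g i) := by ring
    rw [h1]
    refine (norm_add_le _ _).trans ?_
    rw [norm_mul, norm_mul]
    have h2 : ‖∏ i ∈ s, f i‖ ≤ 1 := by
      rw [norm_prod]
      exact Finset.prod_le_one (fun i _ => norm_nonneg _) (fun i _ => hf i)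
    gcongr
    · exact mul_le_of_le_one_right (norm_nonneg _) h2
    · exact (mul_le_of_le_one_left (norm_nonneg _) (hg a)).trans ih

lemma polya_charFun {n : ℕ} (α : Fin n → ℝ) (μ : Measure ℝ) [IsProbabilityMeasure μ]
    (heq : Measure.map (fun x : Fin n → ℝ => ∑ j, α j * x j)
        (Measure.pi fun _ : Fin n => μ) = μ) (t : ℝ) :
    charFun μ t = ∏ j, charFun μ (α j * t) := by
  have h := iIndepFun.charFun_map_fun_sum_eq_prod (P := Measure.pi fun _ : Fin n => μ)
    (X := fun j x => α j * x j) (fun j => (by fun_prop : Measurable _).aemeasurable)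
    (iIndepFun_pi (X := fun j x => α j * x) (fun j => by fun_prop))
  rw [heq] at h
  rw [congrFun h t, Finset.prod_apply]
  refine Finset.prod_congr rfl fun j _ => ?_
  rw [charFun_map_mul_comp (measurable_pi_apply j).aemeasurable, (measurePreserving_eval (fun _ : Fin n => μ) j).map_eq]

lemma polya_mean {n : ℕ} (α : Fin n → ℝ) (μ : Measure ℝ) [IsProbabilityMeasure μ]
    (heq : Measure.map (fun x : Fin n → ℝ => ∑ j, α j * x j)
        (Measure.pi fun _ : Fin n => μ) = μ) (hi : Integrable id μ) :
    ∫ x, x ∂μ = (∑ j, α j) * ∫ x, x ∂μ := by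
  conv_lhs => rw [← heq]
  rw [integral_map (by fun_prop : Measurable _).aemeasurable (by fun_prop), integral_finsetSum, Finset.sum_mul]
  · refine Finset.sum_congr rfl fun j _ => ?_
    rw [integral_const_mul]
    congr 1
    exact integral_comp_eval (μ := fun _ : Fin n => μ) (i := j) (f := fun x => x) (by fun_prop)
  · intro j _
    refine Integrable.const_mul ?_ _
    exact integrable_comp_eval (μ := fun _ : Fin n => μ) (i := j) (f := fun x => x) hi

open Filter Topology in
lemma polya_cos_limit (u : ℕ → ℝ) (hu0 : ∀ k, u k ≠ 0) (hu : Tendsto u atTop (𝓝 0)) (x : ℝ) :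
    Tendsto (fun k => (1 - Real.cos (u k * x)) / (u k) ^ 2) atTop (𝓝 (x ^ 2 / 2)) := by
  have hs : Tendsto (fun k => Real.sinc (u k * x / 2)) atTop (𝓝 1) := by
    have := (Real.continuous_sinc.tendsto 0)
    rw [Real.sinc_zero] at this
    refine this.comp ?_
    simpa using (hu.mul_const x).div_const 2
  have h2 : Tendsto (fun k => x ^ 2 / 2 * Real.sinc (u k * x / 2) ^ 2) atTop (𝓝 (x ^ 2 / 2)) := by
    simpa using (hs.pow 2).const_mul (x ^ 2 / 2)
  refine h2.congr fun k => ?_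
  rcases eq_or_ne x 0 with rfl | hx
  · simp
  have hk := hu0 k
  have hne : u k * x / 2 ≠ 0 := by positivity
  rw [Real.sinc_of_ne_zero hne]
  have h3 : Real.cos (u k * x) = 1 - 2 * Real.sin (u k * x / 2) ^ 2 := by
    have := Real.cos_two_mul (u k * x / 2)
    rw [show 2 * (u k * x / 2) = u k * x by ring] at this
    rw [this, Real.cos_sq']; ring
  rw [h3]
  field_simp
  ring

open Filter Topology in
lemma polya_second_moment (μ : Measure ℝ) [IsProbabilityMeasure μ] (c : ℝ) (u : ℕ → ℝ)
    (hu0 : ∀ k, u k ≠ 0) (hu : Tendsto u atTop (𝓝 0))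
    (h : ∀ k, Real.exp (-c * u k ^ 2) ≤ ‖charFun μ (u k)‖ ^ 2) : MemLp id 2 μ := by
  let μ' := μ.map ((-1 : ℝ) * ·)
  have hμ' : IsProbabilityMeasure μ' := Measure.isProbabilityMeasure_map (by fun_prop)
  let ν := Measure.conv μ μ'
  have hcf : ∀ t, charFun ν t = ((‖charFun μ t‖ ^ 2 : ℝ) : ℂ) := by
    intro t
    rw [charFun_conv, charFun_map_mul, neg_one_mul, charFun_neg, Complex.mul_conj, Complex.normSq_eq_norm_sq]
  have hint : ∀ t, Integrable (fun x : ℝ => Real.cos (t * x)) ν := fun t =>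
    Integrable.of_bound (by fun_prop) 1 (ae_of_all _ fun x => Real.abs_cos_le_one _)
  have hcos : ∀ t, ∫ x, Real.cos (t * x) ∂ν = ‖charFun μ t‖ ^ 2 := by
    intro t
    have h1 := congrArg Complex.re (hcf t)
    rw [Complex.ofReal_re, charFun_apply_real] at h1
    rw [← h1, ← RCLike.re_eq_complex_re, ← integral_re]
    · congr 1
      ext x
      rw [RCLike.re_eq_complex_re, ← Complex.ofReal_mul, Complex.exp_ofReal_mul_I_re]
    · refine Integrable.of_bound (by fun_prop) 1 (ae_of_all _ fun x => ?_)
      rw [← Complex.ofReal_mul, Complex.norm_exp_ofReal_mul_I]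
  have hbound : ∀ k, ∫⁻ x, ENNReal.ofReal ((1 - Real.cos (u k * x)) / (u k) ^ 2) ∂ν
      ≤ ENNReal.ofReal c := by
    intro k
    rw [← ofReal_integral_eq_lintegral_ofReal]
    · apply ENNReal.ofReal_le_ofReal
      rw [integral_div, integral_sub (integrable_const _) (hint _), hcos]
      have hp : 0 < u k ^ 2 := by have := hu0 k; positivity
      rw [div_le_iff₀ hp]
      have := h k
      have h2 := Real.add_one_le_exp (-c * u k ^ 2)
      simp
      linarith
    · exact ((integrable_const _).sub (hint _)).div_const _
    · refine ae_of_all _ fun x => ?_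
      have := Real.cos_le_one (u k * x)
      exact div_nonneg (by linarith) (sq_nonneg _)
  have hfat : ∫⁻ x, ENNReal.ofReal (x ^ 2 / 2) ∂ν ≤ ENNReal.ofReal c := by
    have h1 : ∀ x : ℝ, ENNReal.ofReal (x ^ 2 / 2) =
        liminf (fun k => ENNReal.ofReal ((1 - Real.cos (u k * x)) / (u k) ^ 2)) atTop := fun x =>
      ((ENNReal.continuous_ofReal.tendsto _).comp (polya_cos_limit u hu0 hu x)).liminf_eq.symm
    simp_rw [h1]
    refine (lintegral_liminf_le fun k => by fun_prop).trans ?_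
    refine liminf_le_of_frequently_le' (Frequently.of_forall hbound)
  have hlt : ∫⁻ x, ENNReal.ofReal (x ^ 2 / 2) ∂ν ≠ ⊤ := (hfat.trans_lt ENNReal.ofReal_lt_top).ne
  rw [Measure.lintegral_conv (by fun_prop)] at hlt
  have hae := ae_lt_top' (by fun_prop) hlt
  obtain ⟨x, hx⟩ := hae.exists
  have hm : MemLp (fun y => x - y) 2 μ := by
    rw [memLp_two_iff_integrable_sq (by fun_prop)]
    simp only [μ'] at hx
    rw [lintegral_map (by fun_prop) (by fun_prop)] at hx
    have : Integrable (fun y => (x + -1 * y) ^ 2 / 2) μ := by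
      refine ⟨by fun_prop, ?_⟩
      rw [hasFiniteIntegral_iff_ofReal (ae_of_all _ fun y => by positivity)]
      exact hx
    refine (this.const_mul 2).congr (ae_of_all _ fun y => ?_)
    simp only
    ring
  have := (memLp_const (μ := μ) (p := 2) x).sub hm
  refine this.congr_norm (by fun_prop) (ae_of_all _ fun y => ?_) 
  simp

open Filter Topology Asymptotics in
lemma polya_taylor (μ : Measure ℝ) [IsProbabilityMeasure μ] (h : MemLp id 2 μ) :
    (fun t => charFun μ t - (1 + (∫ x, x ∂μ : ℝ) * t * Complex.I -
      (∫ x, x ^ 2 ∂μ : ℝ) * t ^ 2 / 2)) =o[𝓝 0] fun t : ℝ => t ^ 2 := by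
  have h1 := fun t => taylorWithinEval_charFun_two_zero (P := μ) (X := id) aemeasurable_id
    (by simpa using h) t
  simp only [Measure.map_id, id, Pi.pow_apply] at h1
  simp_rw [← h1]
  have h2 := taylor_isLittleO_univ (f := charFun μ) (x₀ := 0) (n := 2) (contDiff_charFun h)
  simpa using h2

open Filter Topology Asymptotics in
theorem generalized_polya_real
    (n : ℕ) (hn : 2 ≤ n) (α : Fin n → ℝ) (hα0 : ∀ j, α j ≠ 0)
    (hsum : ∑ j, (α j) ^ 2 = 1)
    (μ : Measure ℝ) [IsProbabilityMeasure μ]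
    (heq : Measure.map (fun x : Fin n → ℝ => ∑ j, α j * x j)
        (Measure.pi fun _ : Fin n => μ) = μ) :
    ∃ (m : ℝ) (v : ℝ≥0), μ = gaussianReal m v := by
  have : Nonempty (Fin n) := ⟨⟨0, by omega⟩⟩
  have hlt : ∀ j, |α j| < 1 := by
    intro j
    rw [← sq_lt_one_iff_abs_lt_one, ← hsum]
    have : Nontrivial (Fin n) := Fin.nontrivial_iff_two_le.2 hn
    obtain ⟨i, hi⟩ := exists_ne j
    refine Finset.single_lt_sum (f := fun j => α j ^ 2) hi (Finset.mem_univ _) (Finset.mem_univ _) ?_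
      (fun k _ _ => sq_nonneg _)
    have := hα0 i
    positivity
  obtain ⟨b, hb0, hb1, hαb⟩ : ∃ b : ℝ, 0 ≤ b ∧ b < 1 ∧ ∀ j, |α j| ≤ b := by
    obtain ⟨j, hj⟩ := Finite.exists_max fun j => |α j|
    exact ⟨|α j|, abs_nonneg _, hlt j, hj⟩
  have hf := polya_charFun α μ heq
  have hcont : Continuous (charFun μ) := continuous_charFun
  -- finite second moment
  have hL2 : MemLp id 2 μ := by
    obtain ⟨t₀, ht₀, hne⟩ : ∃ t₀ : ℝ, t₀ ≠ 0 ∧ charFun μ t₀ ≠ 0 := by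
      have h1 : ∀ᶠ t in 𝓝 (0 : ℝ), charFun μ t ≠ 0 :=
        hcont.continuousAt.eventually_ne (by simp)
      have h2 : ∀ᶠ t in 𝓝[≠] (0 : ℝ), t ≠ 0 ∧ charFun μ t ≠ 0 :=
        eventually_mem_nhdsWithin.and (h1.filter_mono nhdsWithin_le_nhds)
      exact h2.exists
    let c := -Real.log (‖charFun μ t₀‖ ^ 2) / t₀ ^ 2
    have hp : 0 < ‖charFun μ t₀‖ ^ 2 := by positivity
    obtain ⟨u, hu0, hPu, hu⟩ := polya_descent α b hb0 hb1 hαb hα0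
      (fun t => Real.exp (-c * t ^ 2) ≤ ‖charFun μ t‖ ^ 2) (by
        intro t ht hP
        by_contra! hcon
        have hpos : 0 < ‖charFun μ t‖ ^ 2 := (Real.exp_pos _).trans_le hP
        have hne : charFun μ t ≠ 0 := by
          intro h0; simp [h0] at hpos
        rw [hf t] at hne hP
        rw [norm_prod, ← Finset.prod_pow] at hP
        have hlt : ∏ j, ‖charFun μ (α j * t)‖ ^ 2 < ∏ j, Real.exp (-c * (α j * t) ^ 2) := by
          refine Finset.prod_lt_prod_of_nonempty (fun j _ => ?_) (fun j _ => hcon j)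
            Finset.univ_nonempty
          have := Finset.prod_ne_zero_iff.1 hne j (Finset.mem_univ j)
          positivity
        rw [← Real.exp_sum] at hlt
        have : ∑ j, -c * (α j * t) ^ 2 = -c * t ^ 2 := by
          simp_rw [mul_pow]
          rw [← Finset.mul_sum, ← Finset.sum_mul, hsum, one_mul]
        rw [this] at hlt
        exact absurd hP (not_le.2 hlt)) t₀ ht₀ (by
        have : -c * t₀ ^ 2 = Real.log (‖charFun μ t₀‖ ^ 2) := by
          simp only [c]; field_simp
        simp only [this]
        rw [Real.exp_log hp])
    exact polya_second_moment μ c u hu0 hu hPu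
  have hmean := polya_mean α μ heq (hL2.integrable (by norm_num))
  let m := ∫ x, x ∂μ
  let v : ℝ≥0 := ⟨variance id μ, variance_nonneg _ _⟩
  refine ⟨m, v, ?_⟩
  have hG2 : MemLp id 2 (gaussianReal m v) := memLp_id_gaussianReal 2
  have hm1 : ∫ x, x ∂(gaussianReal m v) = m := integral_id_gaussianReal
  have hm2 : ∫ x, x ^ 2 ∂(gaussianReal m v) = ∫ x, x ^ 2 ∂μ := by
    have h1 := variance_eq_sub hL2
    have h2 := variance_eq_sub hG2
    rw [variance_id_gaussianReal] at h2
    simp only [Pi.pow_apply, id] at h1 h2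
    rw [hm1] at h2
    have h3 : (v : ℝ) = variance id μ := rfl
    simp only [m] at *
    linarith
  have hlo : (fun t => charFun μ t - charFun (gaussianReal m v) t) =o[𝓝 0]
      fun t : ℝ => t ^ 2 := by
    have h1 := polya_taylor μ hL2
    have h2 := polya_taylor (gaussianReal m v) hG2
    rw [hm1, hm2] at h2
    refine (h1.sub h2).congr_left fun t => ?_
    simp only [m]
    ring
  have hg : ∀ t, charFun (gaussianReal m v) t = ∏ j, charFun (gaussianReal m v) (α j * t) := by
    intro t
    simp_rw [charFun_gaussianReal]
    rw [← Complex.exp_sum]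
    congr 1
    have e1 : (m : ℂ) = (∑ j, (α j : ℂ)) * m := by exact_mod_cast hmean
    have e2 : ∑ j, (α j : ℂ) ^ 2 = 1 := by exact_mod_cast hsum
    calc (t * m * Complex.I - v * t ^ 2 / 2 : ℂ)
        = t * ((∑ j, (α j : ℂ)) * m) * Complex.I - v * ((∑ j, (α j : ℂ) ^ 2) * t ^ 2) / 2 := by
          rw [← e1, e2, one_mul]
      _ = ∑ j, ((α j : ℂ) * t * m * Complex.I - v * ((α j : ℂ) * t) ^ 2 / 2) := by
          rw [Finset.sum_sub_distrib]
          simp only [Finset.sum_mul, Finset.mul_sum, Finset.sum_div]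
          congr 1
          · exact Finset.sum_congr rfl fun j _ => by ring
          · exact Finset.sum_congr rfl fun j _ => by ring
      _ = _ := by push_cast; rfl
  apply Measure.ext_of_charFun
  ext t
  by_contra hne
  have ht : t ≠ 0 := by rintro rfl; simp at hne
  have hpos : 0 < ‖charFun μ t - charFun (gaussianReal m v) t‖ :=
    norm_pos_iff.2 (sub_ne_zero.2 hne)
  let c := ‖charFun μ t - charFun (gaussianReal m v) t‖ / t ^ 2
  have hc : 0 < c := by positivity
  obtain ⟨u, hu0, hPu, hu⟩ := polya_descent α b hb0 hb1 hαb hα0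
    (fun t => c * t ^ 2 ≤ ‖charFun μ t - charFun (gaussianReal m v) t‖) (by
      intro t ht hP
      by_contra! hcon
      have h1 := polya_norm_prod_sub Finset.univ (fun j => charFun μ (α j * t))
        (fun j => charFun (gaussianReal m v) (α j * t)) (fun j => norm_charFun_le_one _)
        (fun j => norm_charFun_le_one _)
      rw [← hf, ← hg] at h1
      have h2 := Finset.sum_lt_sum_of_nonempty (s := Finset.univ) Finset.univ_nonempty
        (fun j _ => hcon j)
      have : ∑ j, c * (α j * t) ^ 2 = c * t ^ 2 := by
        simp_rw [mul_pow]
        rw [← Finset.mul_sum, ← Finset.sum_mul, hsum, one_mul]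
      linarith) t ht (by simp only [c]; field_simp; exact le_rfl)
  have hev := hu.eventually (hlo.def (half_pos hc))
  obtain ⟨k, hk⟩ := hev.exists
  have h1 := hPu k
  have h2 : 0 < u k ^ 2 := by have := hu0 k; positivity
  rw [Real.norm_eq_abs, abs_of_pos h2] at hk
  nlinarith
end

section
/- Let n ≥ 2 and let α_1, …, α_n be nonzero real numbers with α_1² + ⋯ + α_n² = 1. Let f : ℝ → ℂ be a continuous positive definite function with f(0) = 1 satisfying f(s) = f(α_1 s)·f(α_2 s)⋯f(α_n s) for all s ∈ ℝ. Then there exist σ ≥ 0 and β ∈ ℝ such that f(s) = exp(−σ s² + iβs) for all s ∈ ℝ. -/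
open scoped BigOperators

open Filter Topology

lemma polya_propagate (n : ℕ) (hn : 2 ≤ n) (α : Fin n → ℝ) (hα0 : ∀ j, α j ≠ 0)
    (hsum : ∑ j, (α j) ^ 2 = 1) (E : ℝ → ℝ) (hE : ∀ s, E s ≤ ∑ j, E (α j * s))
    (ε : ℝ) (hε : ∀ᶠ s in 𝓝 (0:ℝ), E s ≤ ε * s ^ 2) (s : ℝ) : E s ≤ ε * s ^ 2 := by
  have hlt : ∀ j, |α j| < 1 := by
    intro j
    obtain ⟨i, hij⟩ : ∃ i, i ≠ j := by
      have : Nontrivial (Fin n) := Fin.nontrivial_iff_two_le.2 hn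
      exact exists_ne j
    have h1 : α i ^ 2 + α j ^ 2 ≤ ∑ k, (α k) ^ 2 := by
      rw [← Finset.sum_pair (f := fun k => α k ^ 2) hij]
      exact Finset.sum_le_sum_of_subset_of_nonneg (Finset.subset_univ _)
        (fun _ _ _ => sq_nonneg _)
    have h2 : 0 < α i ^ 2 := by have := hα0 i; positivity
    rw [← sq_lt_one_iff_abs_lt_one]
    linarith
  have : Nonempty (Fin n) := ⟨⟨0, by omega⟩⟩
  obtain ⟨j0, hj0⟩ := Finite.exists_max (fun j => |α j|)
  set a := |α j0| with ha
  have ha1 : a < 1 := hlt j0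
  have ha0 : 0 ≤ a := abs_nonneg _
  obtain ⟨δ, hδ, hball⟩ := Metric.eventually_nhds_iff.1 hε
  have key : ∀ k : ℕ, ∀ t : ℝ, a ^ k * |t| < δ → E t ≤ ε * t ^ 2 := by
    intro k
    induction k with
    | zero =>
      intro t ht
      apply hball
      simpa using ht
    | succ k ih =>
      intro t ht
      refine (hE t).trans ?_
      calc ∑ j, E (α j * t) ≤ ∑ j, ε * (α j * t) ^ 2 := by
            refine Finset.sum_le_sum fun j _ => ih _ ?_
            refine lt_of_le_of_lt ?_ ht
            rw [abs_mul, pow_succ, mul_assoc]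
            have := hj0 j
            gcongr
        _ = ε * t ^ 2 * ∑ j, α j ^ 2 := by
            rw [Finset.mul_sum]; exact Finset.sum_congr rfl fun j _ => by ring
        _ = ε * t ^ 2 := by rw [hsum, mul_one]
  have ht : Tendsto (fun k : ℕ => a ^ k * |s|) atTop (𝓝 (0 * |s|)) :=
    (tendsto_pow_atTop_nhds_zero_of_lt_one ha0 ha1).mul_const _
  rw [zero_mul] at ht
  obtain ⟨k, hk⟩ := (ht.eventually (gt_mem_nhds hδ)).exists
  exact key k s hk

lemma polya_fekete (S : ℝ → ℝ) (hS0 : S 0 = 0) (hc : Continuous S)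
    (hsub : ∀ s t, S (s + t) ≤ S s + S t) (heven : ∀ s, S (-s) = S s)
    (s0 : ℝ) (hs0 : 0 < s0) (c : ℝ) (hc0 : 0 ≤ c) (hlt : c * s0 < S s0) :
    ∀ᶠ t in 𝓝 (0:ℝ), c * |t| ≤ S t := by
  have h1 : ∀ᶠ t in 𝓝 (0:ℝ), S t < S s0 - c * s0 := by
    have : Tendsto S (𝓝 0) (𝓝 0) := by simpa [hS0] using hc.tendsto 0
    exact this.eventually (gt_mem_nhds (by linarith))
  obtain ⟨δ, hδ, hball⟩ := Metric.eventually_nhds_iff.1 h1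
  have hmul : ∀ (k : ℕ) (t : ℝ), S (k * t) ≤ k * S t := by
    intro k t
    induction k with
    | zero => simp [hS0]
    | succ k ih =>
      have := hsub (k * t) t
      push_cast
      rw [add_mul, one_mul, add_mul, one_mul]
      linarith
  have pos : ∀ t : ℝ, 0 < t → t < δ → c * t ≤ S t := by
    intro t ht htδ
    set k := ⌊s0 / t⌋₊ with hk
    have hk1 : (k : ℝ) * t ≤ s0 := by
      have := Nat.floor_le (div_nonneg hs0.le ht.le)
      rwa [← hk, le_div_iff₀ ht] at this
    have hk2 : s0 < (k + 1) * t := by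
      have := Nat.lt_floor_add_one (s0 / t)
      rwa [← hk, div_lt_iff₀ ht] at this
    have hr : S (s0 - k * t) < S s0 - c * s0 := by
      apply hball
      rw [Real.dist_eq, sub_zero, abs_of_nonneg (by linarith)]
      linarith
    have h3 := hsub (k * t) (s0 - k * t)
    rw [add_sub_cancel] at h3
    have h4 := hmul k t
    have h5 : c * (k * t) ≤ c * s0 := by gcongr
    by_contra hcon
    push Not at hcon
    have : (k:ℝ) * S t ≤ k * (c * t) := by gcongr
    nlinarith
  refine Metric.eventually_nhds_iff.2 ⟨δ, hδ, fun t ht => ?_⟩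
  rw [Real.dist_eq, sub_zero] at ht
  rcases lt_trichotomy t 0 with h | h | h
  · rw [abs_of_neg h] at ht ⊢
    rw [← heven t]
    exact pos _ (by linarith) ht
  · simp [h, hS0]
  · rw [abs_of_pos h] at ht ⊢
    exact pos _ h ht

lemma polya_herm (f : ℝ → ℂ) (hpd : IsPositiveDefinite f) (hf0 : f 0 = 1) (s : ℝ) :
    f (-s) = (starRingEnd ℂ) (f s) := by
  obtain ⟨t1, -, h1⟩ := hpd 2 ![0, s] ![1, 1]
  obtain ⟨t2, -, h2⟩ := hpd 2 ![0, s] ![1, Complex.I]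
  simp [Fin.sum_univ_two, hf0, Complex.ext_iff] at h1 h2
  apply Complex.ext <;> simp <;> linarith [h1.1, h1.2, h2.1, h2.2]

lemma polya_krein (f : ℝ → ℂ) (hpd : IsPositiveDefinite f) (hf0 : f 0 = 1) (s t : ℝ) :
    ‖f (s + t) - f s * f t‖ ^ 2 ≤ (1 - ‖f s‖ ^ 2) * (1 - ‖f t‖ ^ 2) := by
  have herm := polya_herm f hpd hf0
  set K := f (s + t) - f s * f t with hK
  have hn : ∀ z : ℂ, z * (starRingEnd ℂ) z = ((‖z‖ ^ 2 : ℝ) : ℂ) := by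
    intro z; rw [Complex.mul_conj, Complex.normSq_eq_norm_sq]
  have form : ∀ x z : ℂ, 0 ≤ ‖x‖ ^ 2 * (1 - ‖f s‖ ^ 2) + ‖z‖ ^ 2 * (1 - ‖f t‖ ^ 2)
      + 2 * (x * (starRingEnd ℂ) z * K).re := by
    intro x z
    obtain ⟨r, hr, h⟩ := hpd 3 ![0, s, -t] ![-(x * f s + z * (starRingEnd ℂ) (f t)), x, z]
    have hst : f (-t - s) = (starRingEnd ℂ) (f (s + t)) := by
      rw [← herm]; congr 1; ring
    simp [Fin.sum_univ_three, hf0, herm, hst] at h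
    have e2 : (((‖x‖ ^ 2 * (1 - ‖f s‖ ^ 2) + ‖z‖ ^ 2 * (1 - ‖f t‖ ^ 2)
      + 2 * (x * (starRingEnd ℂ) z * K).re : ℝ)) : ℂ) = r := by
      rw [← h]
      push_cast
      have e3 := Complex.add_conj (x * (starRingEnd ℂ) z * K)
      push_cast at e3
      rw [← e3]
      have hx := hn x
      have hz := hn z
      have hfs := hn (f s)
      have hft := hn (f t)
      push_cast at hx hz hfs hft
      rw [← hx, ← hz, ← hfs, ← hft, hK]
      simp only [map_mul, map_sub, Complex.conj_conj]
      ring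
    have e4 := Complex.ofReal_injective e2
    rw [e4]; exact hr
  have quad : ∀ a : ℝ, 0 ≤ (1 - ‖f s‖ ^ 2) * (a * a) + (-2 * ‖K‖ ^ 2) * a
      + (1 - ‖f t‖ ^ 2) * ‖K‖ ^ 2 := by
    intro a
    have h := form a (-K)
    have : ((a:ℂ) * (starRingEnd ℂ) (-K) * K).re = - a * ‖K‖ ^ 2 := by
      have : (a:ℂ) * (starRingEnd ℂ) (-K) * K = ((- a * ‖K‖ ^ 2 : ℝ) : ℂ) := by
        have := hn K
        push_cast at this ⊢
        rw [← this]; simp; ring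
      rw [this, Complex.ofReal_re]
    rw [this] at h
    simp only [Complex.norm_real, norm_neg, Real.norm_eq_abs, sq_abs] at h
    nlinarith
  have d := discrim_le_zero quad
  rw [discrim] at d
  have hs1 := form 1 0
  have ht1 := form 0 1
  simp at hs1 ht1
  by_cases h0 : ‖K‖ ^ 2 = 0
  · rw [h0]; apply mul_nonneg <;> simpa
  · have hpos : 0 < ‖K‖ ^ 2 := by positivity
    by_contra hcon
    push Not at hcon
    nlinarith

lemma polya_norm_le (f : ℝ → ℂ) (hpd : IsPositiveDefinite f) (hf0 : f 0 = 1) (s : ℝ) :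
    ‖f s‖ ≤ 1 := by
  have h := polya_krein f hpd hf0 s (-s)
  rw [polya_herm f hpd hf0 s, RCLike.norm_conj] at h
  have : f (s + -s) - f s * (starRingEnd ℂ) (f s) = ((1 - ‖f s‖ ^ 2 : ℝ) : ℂ) := by
    rw [Complex.mul_conj, Complex.normSq_eq_norm_sq, add_neg_cancel, hf0]; push_cast; rfl
  obtain ⟨r, hr, h⟩ := hpd 2 ![0, s] ![-(f s), 1]
  simp [Fin.sum_univ_two, hf0, polya_herm f hpd hf0 s] at h
  have hn : f s * (starRingEnd ℂ) (f s) = ((‖f s‖ ^ 2 : ℝ) : ℂ) := by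
    rw [Complex.mul_conj, Complex.normSq_eq_norm_sq]
  have : ((1 - ‖f s‖ ^ 2 : ℝ) : ℂ) = r := by
    rw [← h]; push_cast at hn ⊢; rw [← hn]; ring
  have := Complex.ofReal_injective this
  nlinarith [norm_nonneg (f s)]

lemma polya_sub (f : ℝ → ℂ) (hpd : IsPositiveDefinite f) (hf0 : f 0 = 1) (s t : ℝ) :
    √(1 - ‖f (s + t)‖ ^ 2) ≤ √(1 - ‖f s‖ ^ 2) + √(1 - ‖f t‖ ^ 2) := by
  have hk := polya_krein f hpd hf0 s t
  have hp1 := polya_norm_le f hpd hf0 s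
  have hq1 := polya_norm_le f hpd hf0 t
  have hp0 := norm_nonneg (f s)
  have hq0 := norm_nonneg (f t)
  have htri : ‖f s‖ * ‖f t‖ - ‖f (s + t)‖ ≤ ‖f (s + t) - f s * f t‖ := by
    rw [← norm_mul, norm_sub_rev]; exact norm_sub_norm_le _ _
  have hP0 := Real.sqrt_nonneg (1 - ‖f s‖ ^ 2)
  have hQ0 := Real.sqrt_nonneg (1 - ‖f t‖ ^ 2)
  have hP2 := Real.sq_sqrt (show 0 ≤ 1 - ‖f s‖ ^ 2 by nlinarith)
  have hQ2 := Real.sq_sqrt (show 0 ≤ 1 - ‖f t‖ ^ 2 by nlinarith)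
  set P := √(1 - ‖f s‖ ^ 2)
  set Q := √(1 - ‖f t‖ ^ 2)
  set p := ‖f s‖
  set q := ‖f t‖
  set r := ‖f (s + t)‖
  have hr0 : 0 ≤ r := norm_nonneg _
  have hK : ‖f (s + t) - f s * f t‖ ≤ P * Q := by
    refine abs_le_of_sq_le_sq' ?_ (by positivity) |>.2
    rw [mul_pow, hP2, hQ2]; exact hk
  refine Real.sqrt_le_iff.2 ⟨by positivity, ?_⟩
  by_cases hc : P * Q ≤ p * q
  · have h1 : (p * q - P * Q) ^ 2 ≤ r ^ 2 := by
      apply pow_le_pow_left₀ <;> linarith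
    have h2 : (p * q - P * Q) ^ 2 + (p * Q + q * P) ^ 2 = 1 := by
      have : (p * q - P * Q) ^ 2 + (p * Q + q * P) ^ 2 = (p^2 + P^2) * (q^2+Q^2) := by ring
      rw [this, hP2, hQ2]; ring
    have h3 : (p * Q + q * P) ^ 2 ≤ (P + Q) ^ 2 := by
      apply pow_le_pow_left₀ (by positivity)
      nlinarith
    linarith
  · push Not at hc
    have h1 : (p * q) ^ 2 < (P * Q) ^ 2 := pow_lt_pow_left₀ hc (by positivity) (by norm_num)
    rw [mul_pow, mul_pow, hP2, hQ2] at h1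
    nlinarith [mul_nonneg hP0 hQ0]

lemma polya_char (p : ℝ → ℂ) (hc : Continuous p) (hn : ∀ s, ‖p s‖ = 1)
    (hm : ∀ s t, p (s + t) = p s * p t) :
    ∃ β : ℝ, ∀ s : ℝ, p s = Complex.exp (Complex.I * (β : ℂ) * (s : ℂ)) := by
  have hne : ∀ s, p s ≠ 0 := fun s h => by simpa [h] using hn s
  have hp0 : p 0 = 1 := by
    have := hm 0 0
    rw [add_zero] at this
    exact (mul_eq_left₀ (hne 0)).1 this.symm
  set F : ℝ → ℂ := fun x => ∫ u in (0:ℝ)..x, p u with hF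
  have hFd : ∀ x, HasDerivAt F (p x) x := fun x =>
    intervalIntegral.integral_hasDerivAt_right (hc.intervalIntegrable _ _)
      hc.aestronglyMeasurable.stronglyMeasurableAtFilter hc.continuousAt
  obtain ⟨x, hx⟩ : ∃ x, F x ≠ 0 := by
    by_contra hcon
    push Not at hcon
    have h0 : F = fun _ => 0 := funext hcon
    have := hFd 0
    rw [h0] at this
    exact hne 0 (this.unique (hasDerivAt_const _ _))
  have hrep : ∀ t, p t = (F (t + x) - F t) / F x := by
    intro t
    rw [eq_div_iff hx]
    have h1 : p t * F x = ∫ u in (0:ℝ)..x, p (t + u) := by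
      simp only [hF, hm, intervalIntegral.integral_const_mul]
    rw [h1, intervalIntegral.integral_comp_add_left, add_zero, hF]
    exact (intervalIntegral.integral_interval_sub_left (hc.intervalIntegrable _ _)
      (hc.intervalIntegrable _ _)).symm
  have hdiff : Differentiable ℝ p := by
    intro t
    have h1 : HasDerivAt (fun t => (F (t + x) - F t) / F x) ((p (t + x) - p t) / F x) t :=
      (((hFd (t + x)).comp_add_const t x).sub (hFd t)).div_const _
    rw [show p = fun t => (F (t + x) - F t) / F x from funext hrep]
    exact h1.differentiableAt
  set c := deriv p 0 with hcdef
  have hd : ∀ t, HasDerivAt p (p t * c) t := by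
    intro t
    have h1 : HasDerivAt p c (t - t) := by rw [sub_self]; exact (hdiff 0).hasDerivAt
    have h2 := (h1.comp_sub_const t t).const_mul (p t)
    refine h2.congr_of_eventuallyEq (Eventually.of_forall fun u => ?_)
    show p u = p t * p (u - t)
    rw [← hm]; congr 1; ring
  have hexp : ∀ s : ℝ, p s = Complex.exp (c * s) := by
    have hder : ∀ t : ℝ, HasDerivAt (fun t : ℝ => p t * Complex.exp (-(c * t))) 0 t := by
      intro t
      have h1 : HasDerivAt (fun t : ℝ => -(c * (t:ℂ))) (-(c * 1)) t :=
        ((Complex.ofRealCLM.hasDerivAt (x := t)).const_mul c).neg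
      have h2 := (hd t).mul h1.cexp
      refine h2.congr_deriv ?_
      ring
    intro s
    have := is_const_of_deriv_eq_zero (fun t => (hder t).differentiableAt)
      (fun t => (hder t).deriv) s 0
    simp only [hp0, Complex.ofReal_zero, mul_zero, neg_zero, Complex.exp_zero, mul_one,
      Complex.exp_neg] at this
    field_simp [Complex.exp_ne_zero] at this
    exact this
  have hre : c.re = 0 := by
    have := hn 1
    rw [hexp 1, Complex.norm_exp] at this
    simpa using this
  refine ⟨c.im, fun s => ?_⟩
  rw [hexp s]
  congr 2
  apply Complex.ext <;> simp [hre]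

lemma polya_unit_prod {ι : Type*} (s : Finset ι) (q : ι → ℂ) (hq : ∀ i, ‖q i‖ = 1) :
    ‖∏ i ∈ s, q i - 1‖ ≤ ∑ i ∈ s, ‖q i - 1‖ := by
  classical
  induction s using Finset.induction_on with
  | empty => simp
  | insert a s ha ih =>
    rw [Finset.prod_insert ha, Finset.sum_insert ha]
    calc ‖q a * ∏ i ∈ s, q i - 1‖ = ‖(q a - 1) + q a * (∏ i ∈ s, q i - 1)‖ := by
          congr 1; ring
      _ ≤ ‖q a - 1‖ + ‖q a * (∏ i ∈ s, q i - 1)‖ := norm_add_le _ _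
      _ ≤ _ := by rw [norm_mul, hq, one_mul]; gcongr

lemma polya_abs (n : ℕ) (hn : 2 ≤ n) (α : Fin n → ℝ) (hα0 : ∀ j, α j ≠ 0)
    (hsum : ∑ j, (α j) ^ 2 = 1)
    (f : ℝ → ℂ) (hcont : Continuous f) (hpd : IsPositiveDefinite f) (hf0 : f 0 = 1)
    (heq : ∀ s : ℝ, f s = ∏ j, f (α j * s)) :
    ∃ σ : ℝ, 0 ≤ σ ∧ ∀ s, ‖f s‖ = Real.exp (-(σ * s ^ 2)) := by
  have hne : ∀ s, f s ≠ 0 := by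
    intro s hs
    have := polya_propagate n hn α hα0 hsum (fun s => if f s = 0 then 1 else 0) (by
      intro s
      by_cases h : f s = 0
      · have h' := h
        rw [heq s, Finset.prod_eq_zero_iff] at h'
        obtain ⟨j, -, hj⟩ := h'
        have h2 := Finset.single_le_sum (f := fun j => if f (α j * s) = 0 then (1:ℝ) else 0)
          (fun i _ => by split_ifs <;> norm_num) (Finset.mem_univ j)
        simp only [hj, if_true] at h2
        simp only [h, if_true]
        exact h2
      · simp only [h, if_false]
        exact Finset.sum_nonneg fun i _ => by split_ifs <;> norm_num) 0 (by
      have : ∀ᶠ s in 𝓝 (0:ℝ), f s ≠ 0 :=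
        hcont.continuousAt.eventually_ne (by rw [hf0]; exact one_ne_zero)
      filter_upwards [this] with t ht
      simp [ht]) s
    simp [hs] at this
    linarith
  have hpos : ∀ s, 0 < ‖f s‖ := fun s => norm_pos_iff.2 (hne s)
  set g : ℝ → ℝ := fun s => -Real.log ‖f s‖ with hg
  have hfg : ∀ s, ‖f s‖ = Real.exp (-(g s)) := by
    intro s; simp only [hg, neg_neg]; rw [Real.exp_log (hpos s)]
  have hg0 : ∀ s, 0 ≤ g s := by
    intro s
    have := Real.log_nonpos (norm_nonneg _) (polya_norm_le f hpd hf0 s)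
    simp only [hg]; linarith
  have hgeq : ∀ s, g s = ∑ j, g (α j * s) := by
    intro s
    simp only [hg]
    rw [heq s, norm_prod, Real.log_prod (fun j _ => (hpos _).ne'), Finset.sum_neg_distrib]
  set S : ℝ → ℝ := fun s => √(1 - ‖f s‖ ^ 2) with hS
  have hSsq : ∀ s, S s ^ 2 = 1 - Real.exp (-(2 * g s)) := by
    intro s
    have h1 := polya_norm_le f hpd hf0 s
    simp only [hS]
    rw [Real.sq_sqrt (by nlinarith [hpos s]), hfg s, ← Real.exp_nat_mul]
    congr 2; push_cast; ring
  have hS0 : ∀ s, 0 ≤ S s := fun s => Real.sqrt_nonneg _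
  have lower : ∀ s0 : ℝ, 0 < s0 → ∀ s, S s0 ^ 2 * s ^ 2 ≤ 2 * g s * s0 ^ 2 := by
    intro s0 hs0 s
    have hc : ∀ c, 0 ≤ c → c * s0 < S s0 → c ^ 2 * s ^ 2 ≤ 2 * g s := by
      intro c hc0 hlt
      have hev := polya_fekete S (by simp [hS, hf0]) (by fun_prop)
        (fun s t => polya_sub f hpd hf0 s t)
        (fun s => by simp only [hS]; rw [polya_herm f hpd hf0, RCLike.norm_conj]) s0 hs0 c hc0 hlt
      have := polya_propagate n hn α hα0 hsum (fun s => - g s) (by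
        intro s; simp only [Finset.sum_neg_distrib]; rw [← hgeq s]) (-(c ^ 2 / 2)) (by
        filter_upwards [hev] with t ht
        have h1 : (c * |t|) ^ 2 ≤ S t ^ 2 := pow_le_pow_left₀ (by positivity) ht 2
        rw [hSsq, mul_pow, sq_abs] at h1
        have h2 := Real.add_one_le_exp (-(2 * g t))
        linarith) s
      linarith
    rcases (hS0 s0).eq_or_lt with h | h
    · have h1 := hg0 s
      have h2 : 0 ≤ 2 * g s * s0 ^ 2 := by positivity
      rw [← h]; linarith
    · have hlim : Tendsto (fun c : ℝ => c ^ 2 * s ^ 2) (𝓝[<] (S s0 / s0))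
          (𝓝 ((S s0 / s0) ^ 2 * s ^ 2)) := by
        apply Tendsto.mono_left _ nhdsWithin_le_nhds
        exact Continuous.tendsto (by fun_prop) _
      have hle := le_of_tendsto hlim (b := 2 * g s) (by
        have hp : 0 < S s0 / s0 := by positivity
        filter_upwards [Ioo_mem_nhdsLT hp] with c hc'
        exact hc c hc'.1.le ((lt_div_iff₀ hs0).1 hc'.2))
      rw [div_pow, div_mul_eq_mul_div, div_le_iff₀ (by positivity)] at hle
      exact hle
  have geven : ∀ s, g (-s) = g s := by
    intro s; simp only [hg]; rw [polya_herm f hpd hf0, RCLike.norm_conj]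
  have lower' : ∀ s0 s, S s0 ^ 2 * s ^ 2 ≤ 2 * g s * s0 ^ 2 := by
    intro s0 s
    rcases lt_trichotomy s0 0 with h | h | h
    · have := lower (-s0) (by linarith) s
      rw [hSsq, geven, ← hSsq] at this
      simpa using this
    · subst h; simp [hS, hf0]
    · exact lower s0 h s
  have upper : ∀ s, s ≠ 0 → ∀ r, g r ≤ g s / s ^ 2 * r ^ 2 := by
    intro s hs r
    set K := g s / s ^ 2 with hK
    have hs2 : 0 < s ^ 2 := by positivity
    have hK0 : 0 ≤ K := div_nonneg (hg0 s) hs2.le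
    have hSK : ∀ r, S r ^ 2 ≤ 2 * K * r ^ 2 := by
      intro r
      have := lower' r s
      rw [← le_div_iff₀ hs2] at this
      refine this.trans (le_of_eq ?_)
      rw [hK]; ring
    have hK' : ∀ K', K < K' → g r ≤ K' * r ^ 2 := by
      intro K' hKK
      refine polya_propagate n hn α hα0 hsum g (fun s => (hgeq s).le) K' ?_ r
      have hev : ∀ᶠ t in 𝓝 (0:ℝ), 2 * K * K' * t ^ 2 < K' - K := by
        have : Tendsto (fun t : ℝ => 2 * K * K' * t ^ 2) (𝓝 0) (𝓝 0) := by
          have : Continuous (fun t : ℝ => 2 * K * K' * t ^ 2) := by fun_prop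
          simpa using this.tendsto 0
        exact this.eventually (gt_mem_nhds (by linarith))
      filter_upwards [hev] with t ht
      by_contra hcon
      push Not at hcon
      have h1 := hSK t
      rw [hSsq] at h1
      have h2 := Real.add_one_le_exp (2 * g t)
      have h3 : Real.exp (-(2 * g t)) * Real.exp (2 * g t) = 1 := by
        rw [← Real.exp_add]; simp
      have h4 : 0 < Real.exp (-(2 * g t)) := Real.exp_pos _
      have h5 : Real.exp (-(2 * g t)) * (2 * g t + 1) ≤ 1 := by
        exact (mul_le_mul_of_nonneg_left h2 h4.le).trans h3.le
      have h6 : Real.exp (-(2 * g t)) * (2 * (K' * t ^ 2) + 1) < 1 := by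
        refine lt_of_lt_of_le ?_ h5
        gcongr
      have h7 : (1 - 2 * K * t ^ 2) * (2 * (K' * t ^ 2) + 1) < 1 := by
        refine lt_of_le_of_lt ?_ h6
        have : 0 ≤ K' := by linarith
        gcongr
        linarith
      nlinarith [sq_nonneg t, mul_nonneg (sq_nonneg t) (sub_nonneg.2 ht.le)]
    have hlim : Tendsto (fun c : ℝ => c * r ^ 2) (𝓝[>] K) (𝓝 (K * r ^ 2)) := by
      apply Tendsto.mono_left _ nhdsWithin_le_nhds
      exact Continuous.tendsto (by fun_prop) _
    exact ge_of_tendsto hlim (by filter_upwards [self_mem_nhdsWithin] with c hc using hK' c hc)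
  refine ⟨g 1, hg0 1, fun s => ?_⟩
  rw [hfg s]
  congr 2
  apply le_antisymm
  · simpa using upper 1 one_ne_zero s
  · by_cases h : s = 0
    · subst h; simpa using hg0 0
    · have := upper s h 1
      rw [one_pow, mul_one, le_div_iff₀ (by positivity)] at this
      exact this

lemma polya_exp_littleO (x y : ℝ) :
    (fun τ : ℝ => Real.exp (τ * (x * y)) * ((Real.exp (τ * x ^ 2) - 1) * (Real.exp (τ * y ^ 2) - 1)
      - (Real.exp (-(τ * (x * y))) - 1) ^ 2)) =o[𝓝 0] (fun τ : ℝ => τ ^ 2) := by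
  have hd : ∀ c : ℝ, Tendsto (fun τ : ℝ => τ⁻¹ * (Real.exp (τ * c) - 1)) (𝓝[≠] 0) (𝓝 c) := by
    intro c
    have h : HasDerivAt (fun τ : ℝ => Real.exp (τ * c)) c 0 := by
      simpa using ((hasDerivAt_id (0:ℝ)).mul_const c).exp
    simpa using hasDerivAt_iff_tendsto_slope_zero.1 h
  have hmain : Tendsto (fun τ : ℝ => (Real.exp (τ * (x * y)) *
      ((Real.exp (τ * x ^ 2) - 1) * (Real.exp (τ * y ^ 2) - 1)
      - (Real.exp (-(τ * (x * y))) - 1) ^ 2)) / τ ^ 2) (𝓝[≠] 0) (𝓝 0) := by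
    have h0 : Tendsto (fun τ : ℝ => Real.exp (τ * (x * y))) (𝓝[≠] 0) (𝓝 1) := by
      apply Tendsto.mono_left _ nhdsWithin_le_nhds
      have : Continuous (fun τ : ℝ => Real.exp (τ * (x * y))) := by fun_prop
      simpa using this.tendsto 0
    have h1 := h0.mul (((hd (x ^ 2)).mul (hd (y ^ 2))).sub ((hd (-(x * y))).pow 2))
    have e : (1:ℝ) * (x ^ 2 * y ^ 2 - (-(x * y)) ^ 2) = 0 := by ring
    rw [e] at h1
    refine h1.congr' (Eventually.of_forall fun τ => ?_)
    simp only [mul_neg, div_eq_mul_inv]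
    rw [← inv_pow]
    ring
  have h2 : (fun τ : ℝ => Real.exp (τ * (x * y)) *
      ((Real.exp (τ * x ^ 2) - 1) * (Real.exp (τ * y ^ 2) - 1)
      - (Real.exp (-(τ * (x * y))) - 1) ^ 2)) =o[𝓝[≠] 0] (fun τ : ℝ => τ ^ 2) := by
    refine (Asymptotics.isLittleO_iff_tendsto' ?_).2 hmain
    filter_upwards [self_mem_nhdsWithin] with τ hτ h
    exact absurd (pow_eq_zero_iff (by norm_num) |>.1 h) hτ
  rw [← nhdsNE_sup_pure]
  refine h2.sup ?_
  rw [Asymptotics.isLittleO_pure]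
  simp

/-- Functional-equation form of the generalized Pólya theorem on the real line: the
normalized continuous positive definite solutions of `f(s) = ∏ⱼ f(αⱼ s)` are exactly
the characteristic functions `exp(-σ s² + iβ s)` of Gaussian distributions. -/
theorem generalized_polya_real_functional
    (n : ℕ) (hn : 2 ≤ n) (α : Fin n → ℝ) (hα0 : ∀ j, α j ≠ 0)
    (hsum : ∑ j, (α j) ^ 2 = 1)
    (f : ℝ → ℂ) (hcont : Continuous f) (hpd : IsPositiveDefinite f) (hf0 : f 0 = 1)
    (heq : ∀ s : ℝ, f s = ∏ j, f (α j * s)) :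
    ∃ (σ : ℝ) (β : ℝ), 0 ≤ σ ∧
      ∀ s : ℝ, f s = Complex.exp (-(σ : ℂ) * (s : ℂ) ^ 2 + Complex.I * (β : ℂ) * (s : ℂ)) := by
  obtain ⟨σ, hσ, habs⟩ := polya_abs n hn α hα0 hsum f hcont hpd hf0 heq
  set p : ℝ → ℂ := fun s => (Real.exp (σ * s ^ 2) : ℂ) * f s with hp
  have hfp : ∀ s, f s = (Real.exp (-(σ * s ^ 2)) : ℂ) * p s := by
    intro s
    simp only [hp]
    rw [← mul_assoc, ← Complex.ofReal_mul, ← Real.exp_add]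
    simp
  have hpn : ∀ s, ‖p s‖ = 1 := by
    intro s
    simp only [hp]
    rw [norm_mul, habs, Complex.norm_real, Real.norm_eq_abs, Real.abs_exp, ← Real.exp_add]
    simp
  have hpeq : ∀ s, p s = ∏ j, p (α j * s) := by
    intro s
    simp only [hp]
    rw [Finset.prod_mul_distrib, ← heq s, ← Complex.ofReal_prod, ← Real.exp_sum]
    congr 3
    rw [← mul_one (σ * s ^ 2), ← hsum, Finset.mul_sum]
    exact Finset.sum_congr rfl fun j _ => by ring
  have hpc : Continuous p := by fun_prop
  clear_value p
  set Q : ℝ → ℝ → ℂ := fun s t => p (s + t) * (starRingEnd ℂ) (p s * p t) with hQ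
  have hQn : ∀ s t, ‖Q s t‖ = 1 := by
    intro s t
    simp only [hQ, norm_mul, RCLike.norm_conj, hpn, mul_one]
  have hQp : ∀ s t, p (s + t) = Q s t * (p s * p t) := by
    intro s t
    simp only [hQ]
    rw [mul_assoc, mul_comm ((starRingEnd ℂ) _), Complex.mul_conj, Complex.normSq_eq_norm_sq,
      norm_mul, hpn, hpn]
    simp
  have hQeq : ∀ s t, Q s t = ∏ j, Q (α j * s) (α j * t) := by
    intro s t
    simp only [hQ]
    rw [Finset.prod_mul_distrib, ← map_prod, Finset.prod_mul_distrib, ← hpeq s, ← hpeq t,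
      hpeq (s + t)]
    simp only [mul_add]
  -- the basic estimate
  have hest : ∀ s t, ‖Q s t - 1‖ ^ 2 ≤ Real.exp (2 * σ * (s * t)) *
      ((Real.exp (2 * σ * s ^ 2) - 1) * (Real.exp (2 * σ * t ^ 2) - 1)
        - (Real.exp (-(2 * σ * (s * t))) - 1) ^ 2) := by
    intro s t
    have hk := polya_krein f hpd hf0 s t
    set A := Real.exp (-(σ * s ^ 2)) with hA
    set B := Real.exp (-(σ * t ^ 2)) with hB
    set R := Real.exp (-(2 * σ * (s * t))) with hR
    have hA0 : 0 < A := Real.exp_pos _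
    have hB0 : 0 < B := Real.exp_pos _
    have hR0 : 0 < R := Real.exp_pos _
    have e1 : Real.exp (2 * σ * (s * t)) = R⁻¹ := by rw [hR, Real.exp_neg, inv_inv]
    have e2 : Real.exp (2 * σ * s ^ 2) = (A ^ 2)⁻¹ := by
      rw [hA, ← Real.exp_nat_mul, ← Real.exp_neg]; congr 1; push_cast; ring
    have e3 : Real.exp (2 * σ * t ^ 2) = (B ^ 2)⁻¹ := by
      rw [hB, ← Real.exp_nat_mul, ← Real.exp_neg]; congr 1; push_cast; ring
    have e4 : Real.exp (-(σ * (s + t) ^ 2)) = A * B * R := by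
      rw [hA, hB, hR, ← Real.exp_add, ← Real.exp_add]; congr 1; ring
    rw [habs s, habs t, hfp (s + t), hfp s, hfp t, e4, hQp s t, ← hA, ← hB] at hk
    have e5 : ((A * B * R : ℝ) : ℂ) * (Q s t * (p s * p t)) - (A : ℂ) * p s * ((B : ℂ) * p t)
        = ((A * B : ℝ) : ℂ) * (p s * p t) * ((R : ℂ) * Q s t - 1) := by
      push_cast; ring
    rw [e5, norm_mul, norm_mul, norm_mul, hpn, hpn, Complex.norm_real, Real.norm_eq_abs,
      abs_of_pos (by positivity)] at hk
    have e6 : ‖(R : ℂ) * Q s t - 1‖ ^ 2 = (R - 1) ^ 2 + R * ‖Q s t - 1‖ ^ 2 := by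
      have h1 : ‖Q s t‖ ^ 2 = 1 := by rw [hQn]; norm_num
      rw [← Complex.normSq_eq_norm_sq, Complex.normSq_apply] at h1 ⊢
      rw [← Complex.normSq_eq_norm_sq, Complex.normSq_apply]
      simp
      linear_combination (R ^ 2 - R) * h1
    rw [mul_pow, e6] at hk
    rw [e1, e2, e3, inv_mul_eq_div, le_div_iff₀ hR0]
    have e7 : ((A ^ 2)⁻¹ - 1) * ((B ^ 2)⁻¹ - 1) = (1 - A ^ 2) * (1 - B ^ 2) / (A * B) ^ 2 := by
      field_simp
    rw [e7, le_sub_iff_add_le, le_div_iff₀ (by positivity)]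
    linarith
  have hQ1 : ∀ s t, Q s t = 1 := by
    intro x y
    have hlo : (fun l : ℝ => ‖Q (x * l) (y * l) - 1‖ ^ 2) =o[𝓝 0] (fun l : ℝ => (l ^ 2) ^ 2) := by
      have ht : Tendsto (fun l : ℝ => 2 * σ * l ^ 2) (𝓝 0) (𝓝 0) := by
        have : Continuous (fun l : ℝ => 2 * σ * l ^ 2) := by fun_prop
        simpa using this.tendsto 0
      have h1 := (polya_exp_littleO x y).comp_tendsto ht
      have h2 : ((fun τ : ℝ => τ ^ 2) ∘ fun l : ℝ => 2 * σ * l ^ 2) =O[𝓝 0]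
          (fun l : ℝ => (l ^ 2) ^ 2) := by
        have : ((fun τ : ℝ => τ ^ 2) ∘ fun l : ℝ => 2 * σ * l ^ 2)
          = fun l => (2 * σ) ^ 2 * (l ^ 2) ^ 2 := by funext l; simp [mul_pow]
        rw [this]
        exact Asymptotics.isBigO_const_mul_self _ _ _
      refine Asymptotics.IsBigO.trans_isLittleO ?_ (h1.trans_isBigO h2)
      refine Asymptotics.isBigO_of_le _ fun l => ?_
      rw [Real.norm_eq_abs, abs_of_nonneg (by positivity)]
      refine le_trans (hest _ _) (le_trans (le_of_eq ?_) (le_abs_self _))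
      simp only [Function.comp]
      rw [show 2 * σ * (x * l * (y * l)) = 2 * σ * l ^ 2 * (x * y) by ring,
        show 2 * σ * (x * l) ^ 2 = 2 * σ * l ^ 2 * x ^ 2 by ring,
        show 2 * σ * (y * l) ^ 2 = 2 * σ * l ^ 2 * y ^ 2 by ring]
    have hle : ∀ ε : ℝ, 0 < ε → ‖Q x y - 1‖ ≤ ε := by
      intro ε hε
      have := polya_propagate n hn α hα0 hsum (fun l => ‖Q (x * l) (y * l) - 1‖) (by
        intro l
        rw [hQeq]
        refine (polya_unit_prod _ _ fun j => hQn _ _).trans (le_of_eq ?_)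
        refine Finset.sum_congr rfl fun j _ => ?_
        rw [mul_left_comm (α j), mul_left_comm (α j)]) ε (by
        filter_upwards [hlo.def (show 0 < ε ^ 2 by positivity)] with l hl
        rw [Real.norm_eq_abs, Real.norm_eq_abs, abs_of_nonneg (by positivity),
          abs_of_nonneg (by positivity), ← mul_pow] at hl
        exact (abs_le_of_sq_le_sq' hl (by positivity)).2) 1
      simpa using this
    have : ‖Q x y - 1‖ ≤ 0 := le_of_forall_pos_le_add fun ε hε => by simpa using hle ε hε
    exact sub_eq_zero.1 (norm_le_zero_iff.1 this)
  obtain ⟨β, hβ⟩ := polya_char p hpc hpn (fun s t => by rw [hQp, hQ1, one_mul])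
  refine ⟨σ, β, hσ, fun s => ?_⟩
  rw [hfp s, hβ s, Complex.exp_add]
  push_cast
  rw [neg_mul]
end
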